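/- arXiv:2208.08899 — 9 statements merged into one kernel-verified Lean document; each statement's English description precedes it below -/
import Mathlib

section
/- Let U : ℕ → ℤ be any sequence of integers satisfying the Fibonacci recurrence U_{n+2} = U_{n+1} + U_n for all n. Then for every prime number p: (i) if p ≡ 1 or 4 (mod 5) then U_p ≡ U_1 (mod p); (ii) if p ≡ 2 or 3 (mod 5) then U_p ≡ U_0 − U_1 (mod p); (iii) U_5 = 3·U_0 + 5·U_1, so in particular U_5 ≡ 3·U_0 (mod 5). -/
/-!
A sequence with the Fibonacci recurrence satisfies `U (n + 1) = F n • U 0 + F (n + 1) • U 1`, so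
only `F p` and `F (p - 1)` modulo `p` matter. For `p ≠ 5` take a primitive fifth root of unity `z`
in characteristic `p`. The Gaussian period `x = -(z + z⁻¹)` is a root of `X ^ 2 - X - 1`, the other
root being `1 - x = -(z ^ 2 + z⁻²)`, and Frobenius sends `x` to `-(z ^ p + z⁻ᵖ)`. Thus it fixes the
two roots when `p ≡ ±1 (mod 5)` and swaps them when `p ≡ ±2 (mod 5)`. Comparing with
`x ^ p = F p * x + F (p - 1)` at both roots, which are distinct because `(2 * x - 1) ^ 2 = 5`,
determines `F p` and `F (p - 1)`.
-/

open Nat (fib)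

theorem int_modEq_iff_exists_eq_add_mul {m a b : ℤ} :
    a ≡ b [ZMOD m] ↔ ∃ c, a = b + m * c :=
  Int.modEq_comm.trans Int.modEq_iff_add_fac

section FibonacciRecurrence

theorem eq_fib_nsmul_add_fib_nsmul {A : Type*} [AddCommMonoid A] {U : ℕ → A}
    (hU : ∀ n, U (n + 2) = U (n + 1) + U n) (n : ℕ) :
    U (n + 1) = fib n • U 0 + fib (n + 1) • U 1 := by
  induction n using Nat.twoStepInduction with
  | zero => simp
  | one => simp [hU 0, add_comm]
  | more n ih ih' =>
    rw [hU (n + 1), ih, ih', Nat.fib_add_two (n := n + 1), Nat.fib_add_two (n := n)]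
    module

theorem exists_eq_add_zsmul_of_fib_modEq {A : Type*} [AddCommGroup A] {U : ℕ → A}
    (hU : ∀ n, U (n + 2) = U (n + 1) + U n) {n : ℕ} {m a b : ℤ}
    (ha : fib n ≡ a [ZMOD m]) (hb : fib (n + 1) ≡ b [ZMOD m]) :
    ∃ c, U (n + 1) = a • U 0 + b • U 1 + m • c := by
  obtain ⟨k, hk⟩ := int_modEq_iff_exists_eq_add_mul.mp ha
  obtain ⟨l, hl⟩ := int_modEq_iff_exists_eq_add_mul.mp hb
  refine ⟨k • U 0 + l • U 1, ?_⟩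
  rw [eq_fib_nsmul_add_fib_nsmul hU, ← natCast_zsmul, ← natCast_zsmul, hk, hl]
  module

theorem pow_succ_eq_fib_mul_add_fib {R : Type*} [CommSemiring R] {x : R} (hx : x ^ 2 = x + 1)
    (n : ℕ) : x ^ (n + 1) = fib (n + 1) * x + fib n := by
  have h_rec (k : ℕ) : x ^ (k + 2) = x ^ (k + 1) + x ^ k := by rw [pow_add, hx]; ring
  simpa [add_comm] using eq_fib_nsmul_add_fib_nsmul h_rec n

end FibonacciRecurrence

section GoldenRoot

variable {R : Type*} [CommRing R] [NoZeroDivisors R]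

theorem eq_and_eq_of_mul_add_eq_mul_add {x y a b c d : R} (hxy : x ≠ y)
    (hx : a * x + b = c * x + d) (hy : a * y + b = c * y + d) : a = c ∧ b = d := by
  have hac : a = c := mul_right_cancel₀ (sub_ne_zero.mpr hxy) (by linear_combination hx - hy)
  exact ⟨hac, by linear_combination hx - x * hac⟩

/-- The condition `u + 2 * v = 1` says that `t ↦ u * t + v` commutes with the conjugation
`t ↦ 1 - t`, so that the hypothesis on `x` passes to the conjugate root `1 - x`. -/
theorem fib_expChar_of_pow_eq {n : ℕ} [ExpChar R (n + 1)] (h_five : (5 : R) ≠ 0) {x u v : R}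
    (hx : x ^ 2 = x + 1) (huv : u + 2 * v = 1) (h_pow : x ^ (n + 1) = u * x + v) :
    (fib (n + 1) : R) = u ∧ (fib n : R) = v := by
  have h_conj : (1 - x) ^ 2 = 1 - x + 1 := by linear_combination hx
  have h_conj_pow : (1 - x) ^ (n + 1) = u * (1 - x) + v := by
    rw [sub_pow_expChar, one_pow]
    linear_combination -h_pow - huv
  have h_ne : x ≠ 1 - x := fun h ↦ h_five <| by linear_combination (2 * x - 1) * h - 4 * hx
  exact eq_and_eq_of_mul_add_eq_mul_add h_ne
    ((pow_succ_eq_fib_mul_add_fib hx n).symm.trans h_pow)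
    ((pow_succ_eq_fib_mul_add_fib h_conj n).symm.trans h_conj_pow)

end GoldenRoot

section GoldenPeriod

variable {R : Type*} [CommRing R]

/-- The quadratic Gaussian period `z + z⁻¹` of a fifth root of unity `z`, negated so that it is a
root of `X ^ 2 - X - 1`. The inverse is written `z ^ 4`, which makes sense in any ring. -/
def goldenPeriod (z : R) : R := -(z + z ^ 4)

theorem goldenPeriod_sq {z : R} (hz : ∑ i ∈ Finset.range 5, z ^ i = 0) :
    goldenPeriod z ^ 2 = goldenPeriod z + 1 := by
  simp only [Finset.sum_range_succ, Finset.sum_range_zero] at hz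
  rw [goldenPeriod]
  linear_combination (z ^ 4 - z ^ 3 + 2 * z - 1) * hz

theorem goldenPeriod_pow_two {z : R} (hz : ∑ i ∈ Finset.range 5, z ^ i = 0) :
    goldenPeriod (z ^ 2) = 1 - goldenPeriod z := by
  simp only [Finset.sum_range_succ, Finset.sum_range_zero] at hz
  rw [goldenPeriod, goldenPeriod]
  linear_combination (-z ^ 4 + z ^ 3 - 1) * hz

theorem goldenPeriod_pow_expChar (p : ℕ) [ExpChar R p] (z : R) :
    goldenPeriod z ^ p = goldenPeriod (z ^ p) := by
  simp only [goldenPeriod, ← frobenius_def, map_neg, map_add, map_pow]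

theorem goldenPeriod_pow_four {z : R} (hz : z ^ 5 = 1) :
    goldenPeriod (z ^ 4) = goldenPeriod z := by
  rw [goldenPeriod, goldenPeriod]
  linear_combination -(z ^ 11 + z ^ 6 + z) * hz

theorem goldenPeriod_pow_of_mod_five_eq_one_or_four {z : R} (hz : z ^ 5 = 1) {n : ℕ}
    (hn : n % 5 = 1 ∨ n % 5 = 4) : goldenPeriod (z ^ n) = goldenPeriod z := by
  rw [pow_eq_pow_mod n hz]
  rcases hn with hn | hn <;> rw [hn]
  · rw [pow_one]
  · exact goldenPeriod_pow_four hz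

theorem goldenPeriod_pow_of_mod_five_eq_two_or_three {z : R} (hz : z ^ 5 = 1) {n : ℕ}
    (hn : n % 5 = 2 ∨ n % 5 = 3) : goldenPeriod (z ^ n) = goldenPeriod (z ^ 2) := by
  rw [pow_eq_pow_mod n hz]
  rcases hn with hn | hn <;> rw [hn]
  calc goldenPeriod (z ^ 3) = goldenPeriod ((z ^ 2) ^ 4) := by
        rw [← pow_mul, pow_eq_pow_mod (2 * 4) hz]
    _ = goldenPeriod (z ^ 2) := goldenPeriod_pow_four (by rw [pow_right_comm, hz, one_pow])

end GoldenPeriod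

section PrimeIndex

variable {n : ℕ}

theorem fib_expChar_of_isPrimitiveRoot {R : Type*} [CommRing R] [IsDomain R] [ExpChar R (n + 1)]
    {z u v : R} (hz : IsPrimitiveRoot z 5) (huv : u + 2 * v = 1)
    (h_period : goldenPeriod (z ^ (n + 1)) = u * goldenPeriod z + v) :
    (fib (n + 1) : R) = u ∧ (fib n : R) = v :=
  have h_five : (5 : R) ≠ 0 := mod_cast hz.neZero'.out
  fib_expChar_of_pow_eq h_five (goldenPeriod_sq (hz.geom_sum_eq_zero (by simp))) huv
    ((goldenPeriod_pow_expChar (n + 1) z).trans h_period)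

theorem exists_isPrimitiveRoot_algebraicClosure_zmod {p m : ℕ} [Fact p.Prime] (h_dvd : ¬p ∣ m) :
    ∃ z : AlgebraicClosure (ZMod p), IsPrimitiveRoot z m := by
  have : NeZero (m : AlgebraicClosure (ZMod p)) := ⟨by rwa [Ne, CharP.cast_eq_zero_iff _ p]⟩
  exact HasEnoughRootsOfUnity.exists_primitiveRoot _ m

theorem fib_modEq_of_prime {a b : ℤ} (hp : (n + 1).Prime) (h_ne : n + 1 ≠ 5) (hab : a + 2 * b = 1)
    (h_period : ∀ {K : Type} [Field K] {z : K}, IsPrimitiveRoot z 5 →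
      goldenPeriod (z ^ (n + 1)) = a * goldenPeriod z + b) :
    fib n ≡ b [ZMOD (n + 1 : ℕ)] ∧ fib (n + 1) ≡ a [ZMOD (n + 1 : ℕ)] := by
  have : Fact (n + 1).Prime := ⟨hp⟩
  obtain ⟨z, hz⟩ := exists_isPrimitiveRoot_algebraicClosure_zmod (p := n + 1) (m := 5)
    (by rwa [Nat.prime_dvd_prime_iff_eq hp Nat.prime_five])
  have : ExpChar (AlgebraicClosure (ZMod (n + 1))) (n + 1) := .prime hp
  obtain ⟨h_succ, h_fib⟩ :=
    fib_expChar_of_isPrimitiveRoot hz (mod_cast congrArg Int.cast hab) (h_period hz)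
  constructor <;> rw [← CharP.intCast_eq_intCast (AlgebraicClosure (ZMod (n + 1))) (n + 1)] <;>
    simpa

theorem fib_modEq_of_prime_of_mod_five_eq_one_or_four (hp : (n + 1).Prime)
    (h_mod : (n + 1) % 5 = 1 ∨ (n + 1) % 5 = 4) :
    fib n ≡ 0 [ZMOD (n + 1 : ℕ)] ∧ fib (n + 1) ≡ 1 [ZMOD (n + 1 : ℕ)] := by
  refine fib_modEq_of_prime hp (by lia) (by simp) fun hz ↦ ?_
  simpa using goldenPeriod_pow_of_mod_five_eq_one_or_four hz.pow_eq_one h_mod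

theorem fib_modEq_of_prime_of_mod_five_eq_two_or_three (hp : (n + 1).Prime)
    (h_mod : (n + 1) % 5 = 2 ∨ (n + 1) % 5 = 3) :
    fib n ≡ 1 [ZMOD (n + 1 : ℕ)] ∧ fib (n + 1) ≡ -1 [ZMOD (n + 1 : ℕ)] := by
  refine fib_modEq_of_prime hp (by lia) (by simp) fun {K} _ z hz ↦ ?_
  calc goldenPeriod (z ^ (n + 1)) = goldenPeriod (z ^ 2) :=
        goldenPeriod_pow_of_mod_five_eq_two_or_three hz.pow_eq_one h_mod
    _ = 1 - goldenPeriod z := goldenPeriod_pow_two (hz.geom_sum_eq_zero (by simp))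
    _ = (-1 : ℤ) * goldenPeriod z + (1 : ℤ) := by push_cast; ring

end PrimeIndex

theorem fibonacci_type_congruences_general {A : Type*} [AddCommGroup A] (U : ℕ → A)
    (hU : ∀ n : ℕ, U (n + 2) = U (n + 1) + U n) :
    (∀ p : ℕ, p.Prime →
      ((p % 5 = 1 ∨ p % 5 = 4) → ∃ c, U p = U 1 + (p : ℤ) • c) ∧
      ((p % 5 = 2 ∨ p % 5 = 3) → ∃ c, U p = U 0 - U 1 + (p : ℤ) • c)) ∧
    U 5 = (3 : ℤ) • U 0 + (5 : ℤ) • U 1 := by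
  refine ⟨fun p hp ↦ ?_, by exact_mod_cast eq_fib_nsmul_add_fib_nsmul hU 4⟩
  obtain ⟨n, rfl⟩ := Nat.exists_eq_add_one_of_ne_zero hp.ne_zero
  refine ⟨fun h_mod ↦ ?_, fun h_mod ↦ ?_⟩
  · obtain ⟨h_fib, h_succ⟩ := fib_modEq_of_prime_of_mod_five_eq_one_or_four hp h_mod
    simpa using exists_eq_add_zsmul_of_fib_modEq hU h_fib h_succ
  · obtain ⟨h_fib, h_succ⟩ := fib_modEq_of_prime_of_mod_five_eq_two_or_three hp h_mod
    simpa [sub_eq_add_neg] using exists_eq_add_zsmul_of_fib_modEq hU h_fib h_succ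

/-- **Theorem 1 (Fibonacci-type congruences).**
Let `U : ℕ → ℤ` satisfy `U (n+2) = U (n+1) + U n` for all `n`. Then for every prime `p`:
(i) if `p ≡ 1` or `4 (mod 5)` then `U p ≡ U 1 (mod p)`;
(ii) if `p ≡ 2` or `3 (mod 5)` then `U p ≡ U 0 - U 1 (mod p)`;
(iii) `U 5 = 3 * U 0 + 5 * U 1`, hence `U 5 ≡ 3 * U 0 (mod 5)`. -/
theorem fibonacci_type_congruences (U : ℕ → ℤ)
    (hU : ∀ n : ℕ, U (n + 2) = U (n + 1) + U n) :
    (∀ p : ℕ, p.Prime →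
      ((p % 5 = 1 ∨ p % 5 = 4) → U p ≡ U 1 [ZMOD (p : ℤ)]) ∧
      ((p % 5 = 2 ∨ p % 5 = 3) → U p ≡ U 0 - U 1 [ZMOD (p : ℤ)])) ∧
    U 5 = 3 * U 0 + 5 * U 1 ∧ U 5 ≡ 3 * U 0 [ZMOD (5 : ℤ)] := by
  obtain ⟨h_prime, h_five⟩ := fibonacci_type_congruences_general U hU
  simpa [int_modEq_iff_exists_eq_add_mul, h_five] using h_prime
end

section
/- Let A be a commutative ring and C ∈ A[X] a monic polynomial of degree d ≥ 2, C = ∑_{k=0}^{d} c_k X^k with c_d = 1. For n ∈ ℕ let R_n be the remainder of the division of X^n by C. Then: (1) the sequence (R_n) in A[X] is of class C, i.e. ∑_{k=0}^{d} c_k R_{n+k} = 0 for all n; (2) for every sequence U : ℕ → A of class C and every n ∈ ℕ, U_n = ∑_{k=0}^{d−1} (coefficient of X^k in R_n) · U_k. -/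
open Polynomial

/-!
A sequence `U` in an `A`-module is the same thing as the `A`-linear map `φ` on `A[X]` sending
`X ^ n` to `U n`, and `U` is of class `P` exactly when `φ` vanishes on the ideal `(P)`. For the
sequence of remainders, `φ` is reduction modulo `P`, which kills `(P)`. For an arbitrary `U` of
class `P`, the map `φ` takes the same value at `X ^ n` and at its remainder, since the two differ
by an element of `(P)`.
-/

/-- A sequence `U` in a module is *of class `P`* if it satisfies the linear recurrence whose
coefficients are those of `P`. The polynomial need not be monic. -/
def IsOfClass {A M : Type*} [Semiring A] [AddCommMonoid M] [Module A M]
    (P : A[X]) (U : ℕ → M) : Prop :=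
  ∀ n, ∑ k ∈ Finset.range (P.natDegree + 1), P.coeff k • U (n + k) = 0

/-- The umbral map of a sequence `U`: the linear map on polynomials replacing each power `X ^ n` by
`U n`. It turns recurrences satisfied by `U` into the vanishing of a linear map. -/
noncomputable def umbralMap {A M : Type*} [Semiring A] [AddCommMonoid M] [Module A M]
    (U : ℕ → M) : A[X] →ₗ[A] M :=
  lsum fun n => LinearMap.toSpanSingleton A M (U n)

section Semiring

variable {A M : Type*} [Semiring A] [AddCommMonoid M] [Module A M]

theorem umbralMap_monomial (U : ℕ → M) (n : ℕ) (a : A) :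
    umbralMap U (monomial n a) = a • U n := by
  simp [umbralMap, sum_monomial_index]

theorem umbralMap_X_pow (U : ℕ → M) (n : ℕ) : umbralMap U (X ^ n : A[X]) = U n := by
  rw [X_pow_eq_monomial, umbralMap_monomial, one_smul]

theorem umbralMap_eq_sum_range (U : ℕ → M) {p : A[X]} {d : ℕ} (hp : p.degree < d) :
    umbralMap U p = ∑ k ∈ Finset.range d, p.coeff k • U k := by
  rw [← Fin.sum_univ_eq_sum_range fun k => p.coeff k • U k]
  exact (sum_fin (fun k a => a • U k) (fun k => zero_smul A (U k)) hp).symm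

theorem umbralMap_mul_X_pow (U : ℕ → M) (p : A[X]) (n : ℕ) :
    umbralMap U (p * X ^ n) = ∑ k ∈ Finset.range (p.natDegree + 1), p.coeff k • U (n + k) := by
  conv_lhs => rw [p.as_sum_range]
  simp only [Finset.sum_mul, monomial_mul_X_pow, map_sum, umbralMap_monomial, Nat.add_comm]

end Semiring

theorem isOfClass_iff_forall_umbralMap_mul_eq_zero {A M : Type*} [CommSemiring A]
    [AddCommMonoid M] [Module A M] {P : A[X]} {U : ℕ → M} :
    IsOfClass P U ↔ ∀ q, umbralMap U (P * q) = 0 := by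
  refine ⟨fun hU q => ?_, fun h n => by rw [← umbralMap_mul_X_pow, h]⟩
  induction q using Polynomial.induction_on' with
  | add p q hp hq => rw [mul_add, map_add, hp, hq, add_zero]
  | monomial n a =>
    rw [← smul_X_eq_monomial, mul_smul_comm, map_smul, umbralMap_mul_X_pow, hU n, smul_zero]

section CommRing

variable {A M : Type*} [CommRing A] [AddCommMonoid M] [Module A M] {P : A[X]}

variable (P) in
theorem umbralMap_X_pow_modByMonic_eq_modByMonicHom :
    umbralMap (fun n => X ^ n %ₘ P) = modByMonicHom P := by
  ext1 n
  ext1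
  simp [umbralMap_monomial, X_pow_eq_monomial, modByMonicHom]

theorem isOfClass_X_pow_modByMonic (hP : P.Monic) : IsOfClass P fun n => X ^ n %ₘ P := by
  rw [isOfClass_iff_forall_umbralMap_mul_eq_zero,
    umbralMap_X_pow_modByMonic_eq_modByMonicHom]
  exact fun q => (modByMonic_eq_zero_iff_dvd hP).2 (dvd_mul_right P q)

theorem IsOfClass.umbralMap_modByMonic {U : ℕ → M} (hU : IsOfClass P U) (p : A[X]) :
    umbralMap U (p %ₘ P) = umbralMap U p := by
  conv_rhs => rw [← modByMonic_add_div p P, map_add,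
    isOfClass_iff_forall_umbralMap_mul_eq_zero.1 hU, add_zero]

theorem degree_modByMonic_lt_natDegree (p : A[X]) (hP : P.Monic) :
    (p %ₘ P).degree < P.natDegree := by
  nontriviality A
  exact (degree_modByMonic_lt p hP).trans_le degree_le_natDegree

theorem IsOfClass.eq_sum_coeff_X_pow_modByMonic_smul {U : ℕ → M} (hU : IsOfClass P U)
    (hP : P.Monic) (n : ℕ) :
    U n = ∑ k ∈ Finset.range P.natDegree, (X ^ n %ₘ P).coeff k • U k :=
  calc
    U n = umbralMap U (X ^ n : A[X]) := (umbralMap_X_pow U n).symm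
    _ = umbralMap U (X ^ n %ₘ P) := (hU.umbralMap_modByMonic (X ^ n)).symm
    _ = ∑ k ∈ Finset.range P.natDegree, (X ^ n %ₘ P).coeff k • U k :=
      umbralMap_eq_sum_range U (degree_modByMonic_lt_natDegree (X ^ n) hP)

end CommRing

theorem remainders_of_class_C_and_linear_formula_general {A M : Type*} [CommRing A]
    [AddCommMonoid M] [Module A M] {P : A[X]} (hP : P.Monic) :
    IsOfClass P (fun n => X ^ n %ₘ P) ∧
    ∀ U : ℕ → M, IsOfClass P U →
      ∀ n, U n = ∑ k ∈ Finset.range P.natDegree, (X ^ n %ₘ P).coeff k • U k :=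
  ⟨isOfClass_X_pow_modByMonic hP, fun _ hU => hU.eq_sum_coeff_X_pow_modByMonic_smul hP⟩

/-- **Proposition 5.** Let `A` be a commutative ring and `C ∈ A[X]` monic of degree
`d ≥ 2`.  Writing `R n` for the remainder of the euclidean division of `X^n` by `C`:
(1) the sequence of remainders is of class `C`, i.e. `∑_{k=0}^{d} c_k R_{n+k} = 0`;
(2) every sequence `U : ℕ → A` of class `C` satisfies `U n = ∑_{k<d} (R n).coeff k * U k`. -/
theorem remainders_of_class_C_and_linear_formula
    {A : Type*} [CommRing A] (d : ℕ) (hd : 2 ≤ d)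
    (C : Polynomial A) (hC : C.Monic) (hdeg : C.natDegree = d) :
    (∀ n : ℕ,
      ∑ k ∈ Finset.range (d + 1), Polynomial.C (C.coeff k) * (X ^ (n + k) %ₘ C) = 0) ∧
    (∀ U : ℕ → A,
      (∀ n : ℕ, ∑ k ∈ Finset.range (d + 1), C.coeff k * U (n + k) = 0) →
      ∀ n : ℕ, U n = ∑ k ∈ Finset.range d, (X ^ n %ₘ C).coeff k * U k) := by
  subst hdeg
  simpa only [IsOfClass, smul_eq_C_mul, smul_eq_mul] using
    remainders_of_class_C_and_linear_formula_general (M := A) hC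
end

section
/- With the number-field setup below, let λ_1,…,λ_d ∈ E and suppose the sequence U_n := λ_1 x_1^n + ⋯ + λ_d x_d^n lies in A for all n ∈ ℕ. Then each product Δ_C·λ_i lies in B. Moreover, if Q is a prime ideal of B, P := Q ∩ A, p := |A/P|, and σ ∈ Gal(E/K) satisfies σ(x) ≡ x^p (mod Q) for all x ∈ B, then Δ_C·U_p ≡ Δ_C·(λ_1 σ(x_1) + ⋯ + λ_d σ(x_d)) (mod Q), i.e. Δ_C·U_p − Δ_C·∑_i λ_i σ(x_i) ∈ Q. -/
open Polynomial NumberField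

/-!
A sequence `n ↦ ∑ i, xᵢⁿ • vᵢ` with values in a submodule `N` satisfies `∑ i, f(xᵢ) • vᵢ ∈ N` for
every polynomial `f`. The choice `f = ∏ j ≠ i, (X - xⱼ)` isolates `vᵢ`, so `∏ j ≠ i, (xᵢ - xⱼ)`
carries `vᵢ` into `N`; this product divides the discriminant `Δ`. Since `Δ λᵢ` is therefore
integral, the congruences `xᵢ ^ p ≡ σ xᵢ` may be multiplied by `Δ λᵢ` and summed.
-/

section PowerSums

variable {ι R M : Type*} {s : Finset ι} {x : ι → R} {v : ι → M}

theorem sum_eval_smul_mem [Semiring R] [AddCommMonoid M] [Module R M] {N : Submodule R M} {m : ℕ}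
    (hN : ∀ n < m, ∑ i ∈ s, x i ^ n • v i ∈ N) {f : R[X]} (hf : f.natDegree < m) :
    ∑ i ∈ s, f.eval (x i) • v i ∈ N := by
  have sum_eq : ∑ i ∈ s, f.eval (x i) • v i =
      ∑ n ∈ Finset.range m, f.coeff n • ∑ i ∈ s, x i ^ n • v i := by
    simp only [eval_eq_sum_range' hf, Finset.sum_smul, Finset.smul_sum, mul_smul]
    exact Finset.sum_comm
  rw [sum_eq]
  exact N.sum_mem fun n hn => N.smul_mem _ (hN n (Finset.mem_range.mp hn))

theorem prod_erase_sub_smul_mem [DecidableEq ι] [CommRing R] [AddCommMonoid M] [Module R M]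
    {N : Submodule R M} (hN : ∀ n < s.card, ∑ i ∈ s, x i ^ n • v i ∈ N) {i : ι} (hi : i ∈ s) :
    (∏ j ∈ s.erase i, (x i - x j)) • v i ∈ N := by
  cases subsingleton_or_nontrivial R
  · have := Module.subsingleton R M
    rw [Subsingleton.elim (_ • v i) 0]
    exact N.zero_mem
  have natDegree_lt : (Lagrange.nodal (s.erase i) x).natDegree < s.card := by
    rw [Lagrange.natDegree_nodal]
    exact Finset.card_erase_lt_of_mem hi
  have sum_eq : ∑ j ∈ s, (Lagrange.nodal (s.erase i) x).eval (x j) • v j =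
      (∏ j ∈ s.erase i, (x i - x j)) • v i := by
    rw [Finset.sum_eq_single_of_mem i hi, Lagrange.eval_nodal]
    intro j hj hji
    rw [Lagrange.eval_nodal_at_node (Finset.mem_erase.mpr ⟨hji, hj⟩), zero_smul]
  exact sum_eq ▸ sum_eval_smul_mem hN natDegree_lt

end PowerSums

section Discriminant

variable {ι R : Type*} [Fintype ι] [LinearOrder ι] [CommRing R]

theorem prod_erase_sub_dvd_prod_lt_sub_sq (x : ι → R) (i : ι) :
    ∏ j ∈ Finset.univ.erase i, (x i - x j) ∣
      ∏ q ∈ Finset.univ.filter (fun q : ι × ι => q.1 < q.2), (x q.1 - x q.2) ^ 2 := by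
  let sortedPair (j : ι) : ι × ι := (min j i, max j i)
  have sortedPair_injective : Function.Injective sortedPair := by
    intro j k hjk
    obtain ⟨hmin, hmax⟩ := Prod.ext_iff.mp hjk
    exact eq_of_inf_eq_sup_eq hmin hmax
  calc
    ∏ j ∈ Finset.univ.erase i, (x i - x j)
        ∣ ∏ j ∈ Finset.univ.erase i, (x (min j i) - x (max j i)) ^ 2 := by
      refine Finset.prod_dvd_prod_of_dvd _ _ fun j _ => ?_
      rcases le_total i j with hij | hji
      · rw [min_eq_right hij, max_eq_left hij]
        exact dvd_pow_self _ two_ne_zero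
      · rw [min_eq_left hji, max_eq_right hji, sub_sq_comm]
        exact dvd_pow_self _ two_ne_zero
    _ = ∏ q ∈ (Finset.univ.erase i).image sortedPair, (x q.1 - x q.2) ^ 2 := by
      rw [Finset.prod_image sortedPair_injective.injOn]
    _ ∣ ∏ q ∈ Finset.univ.filter (fun q : ι × ι => q.1 < q.2), (x q.1 - x q.2) ^ 2 := by
      refine Finset.prod_dvd_prod_of_subset _ _ _ fun q hq => ?_
      obtain ⟨j, hj, rfl⟩ := Finset.mem_image.mp hq
      exact Finset.mem_filter.mpr
        ⟨Finset.mem_univ _, min_lt_max.mpr (Finset.ne_of_mem_erase hj)⟩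

theorem prod_lt_sub_sq_smul_mem {M : Type*} [AddCommMonoid M] [Module R M] {N : Submodule R M}
    {x : ι → R} {v : ι → M} (hN : ∀ n < Fintype.card ι, ∑ i, x i ^ n • v i ∈ N) (i : ι) :
    (∏ q ∈ Finset.univ.filter (fun q : ι × ι => q.1 < q.2), (x q.1 - x q.2) ^ 2) • v i ∈ N := by
  obtain ⟨c, hc⟩ := prod_erase_sub_dvd_prod_lt_sub_sq x i
  rw [hc, mul_comm, mul_smul]
  exact N.smul_mem c (prod_erase_sub_smul_mem hN (Finset.mem_univ i))

end Discriminant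

theorem mul_sum_sub_mul_sum_mem {ι B F : Type*} [CommRing B] [Ring F] [Algebra B F]
    {N : Submodule B F} {s : Finset ι} {δ : F} {c y z : ι → F}
    (hc : ∀ i ∈ s, ∃ b : B, algebraMap B F b = δ * c i)
    (hyz : ∀ i ∈ s, y i - z i ∈ N) :
    δ * ∑ i ∈ s, c i * z i - δ * ∑ i ∈ s, c i * y i ∈ N := by
  have sum_eq : δ * ∑ i ∈ s, c i * z i - δ * ∑ i ∈ s, c i * y i =
      -∑ i ∈ s, δ * c i * (y i - z i) := by
    rw [← mul_sub, ← Finset.sum_sub_distrib, Finset.mul_sum, ← Finset.sum_neg_distrib]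
    exact Finset.sum_congr rfl fun i _ => by noncomm_ring
  rw [sum_eq]
  refine N.neg_mem (N.sum_mem fun i hi => ?_)
  obtain ⟨b, hb⟩ := hc i hi
  rw [← hb, ← Algebra.smul_def]
  exact N.smul_mem b (hyz i hi)

theorem deltaLambda_integral_and_frobenius_congruence_general
    {ι A B F : Type*} [Fintype ι] [LinearOrder ι] [CommSemiring A] [CommRing B] [Ring F]
    [Algebra A B] [Algebra B F] [Algebra A F] [IsScalarTower A B F]
    (x : ι → B) (Δ : A)
    (hΔ : algebraMap A B Δ =
      ∏ q ∈ Finset.univ.filter (fun q : ι × ι => q.1 < q.2), (x q.1 - x q.2) ^ 2)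
    (lam : ι → F) (U : ℕ → A)
    (hUdef : ∀ n : ℕ, algebraMap A F (U n) = ∑ i, lam i * (algebraMap B F (x i)) ^ n) :
    (∀ i, ∃ b : B, algebraMap B F b = algebraMap A F Δ * lam i) ∧
    (∀ (Q : Ideal B) (p : ℕ) (y : ι → F),
      (∀ i, ∃ q ∈ Q, algebraMap B F q = y i - (algebraMap B F (x i)) ^ p) →
      ∃ q ∈ Q, algebraMap B F q =
        algebraMap A F Δ * algebraMap A F (U p) - algebraMap A F Δ * ∑ i, lam i * y i) := by
  have integral (i : ι) : ∃ b : B, algebraMap B F b = algebraMap A F Δ * lam i := by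
    have sum_mem (n : ℕ) : ∑ i, x i ^ n • lam i ∈ LinearMap.range (Algebra.linearMap B F) :=
      ⟨algebraMap A B (U n), by
        simp only [Algebra.linearMap_apply, ← IsScalarTower.algebraMap_apply, hUdef,
          Algebra.smul_def, Algebra.commutes, ← map_pow]⟩
    have delta_smul_mem := prod_lt_sub_sq_smul_mem (fun n _ => sum_mem n) i
    rwa [← hΔ, algebraMap_smul, Algebra.smul_def] at delta_smul_mem
  refine ⟨integral, fun Q p y hy => ?_⟩
  rw [hUdef]
  exact mul_sum_sub_mul_sum_mem (N := Submodule.map (Algebra.linearMap B F) Q)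
    (fun i _ => integral i) (fun i _ => hy i)

/-- **Lemma 9 (with the integrality of the `λᵢ`).**  Set-up: `E/K` is a Galois extension of
number fields, `A = 𝓞 K`, `B = 𝓞 E`; `C ∈ A[X]` is monic of degree `d ≥ 2` with pairwise
distinct roots `x₁, …, x_d ∈ B` generating `E` over `K`; `Δ = ∏_{i<j} (xᵢ - xⱼ)² ∈ A`.
If `λ₁, …, λ_d ∈ E` are such that `U n = ∑ᵢ λᵢ xᵢⁿ` lies in `A` for all `n`, then each
`Δ·λᵢ` lies in `B`; moreover, if `Q` is a prime of `B`, `P = Q ∩ A`, `p = |A/P|`, and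
`σ ∈ Gal(E/K)` satisfies `σ(x) ≡ x^p (mod Q)` for all `x ∈ B`, then
`Δ·U_p ≡ Δ·∑ᵢ λᵢ σ(xᵢ) (mod Q)`. -/
theorem deltaLambda_integral_and_frobenius_congruence
    {K E : Type*} [Field K] [NumberField K] [Field E] [NumberField E]
    [Algebra K E] [IsGalois K E]
    (d : ℕ) (hd : 2 ≤ d)
    (C : Polynomial (𝓞 K)) (hC : C.Monic) (hdeg : C.natDegree = d)
    (x : Fin d → 𝓞 E) (hxinj : Function.Injective x)
    (hsplit : C.map (algebraMap (𝓞 K) (𝓞 E)) = ∏ i, (X - Polynomial.C (x i)))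
    (hgen : IntermediateField.adjoin K
      (Set.range fun i => (algebraMap (𝓞 E) E (x i))) = ⊤)
    (Δ : 𝓞 K)
    (hΔ : algebraMap (𝓞 K) (𝓞 E) Δ =
      ∏ q ∈ Finset.univ.filter (fun q : Fin d × Fin d => q.1 < q.2), (x q.1 - x q.2) ^ 2)
    (lam : Fin d → E) (U : ℕ → 𝓞 K)
    (hUdef : ∀ n : ℕ,
      algebraMap (𝓞 K) E (U n) = ∑ i, lam i * (algebraMap (𝓞 E) E (x i)) ^ n) :
    (∀ i, ∃ b : 𝓞 E, algebraMap (𝓞 E) E b = algebraMap (𝓞 K) E Δ * lam i) ∧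
    (∀ (Q : Ideal (𝓞 E)), Q.IsPrime → Q ≠ ⊥ →
      ∀ σ : E ≃ₐ[K] E,
        (∀ b : 𝓞 E, ∃ q ∈ Q, algebraMap (𝓞 E) E q =
          σ (algebraMap (𝓞 E) E b) -
            (algebraMap (𝓞 E) E b) ^
              (Nat.card (𝓞 K ⧸ Ideal.comap (algebraMap (𝓞 K) (𝓞 E)) Q))) →
        ∃ q ∈ Q, algebraMap (𝓞 E) E q =
          algebraMap (𝓞 K) E Δ *
              algebraMap (𝓞 K) E
                (U (Nat.card (𝓞 K ⧸ Ideal.comap (algebraMap (𝓞 K) (𝓞 E)) Q))) -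
            algebraMap (𝓞 K) E Δ *
              ∑ i, lam i * σ (algebraMap (𝓞 E) E (x i))) := by
  have general := deltaLambda_integral_and_frobenius_congruence_general x Δ hΔ lam U hUdef
  exact ⟨general.1, fun Q _ _ σ hσ => general.2 Q _ _ fun i => hσ (x i)⟩
end

section
/- Let E/K be a Galois extension of fields and C ∈ K[X] a monic polynomial of degree d ≥ 2 with d pairwise distinct roots x₁,…,x_d in E generating E over K. For σ ∈ Gal(E/K) let Ψ_σ ∈ E[X] be the unique polynomial of degree ≤ d−1 with Ψ_σ(x_i) = σ(x_i) for all i. Then: (1) the map σ ↦ Ψ_σ from Gal(E/K) to E[X] is injective; (2) for all θ, σ ∈ Gal(E/K), applying θ to the coefficients of Ψ_σ yields Ψ_{θσθ⁻¹}, i.e. θ(Ψ_σ) = Ψ_{θσθ⁻¹}; (3) Ψ_σ has all its coefficients in K if and only if σ lies in the center of Gal(E/K). -/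
open Polynomial

/-!
Two polynomials of degree less than `#ι` agreeing at the `#ι` distinct nodes `x i` coincide. If `g`
permutes the nodes, then `g • Ψ h` sends `x i = g • (g⁻¹ • x i)` to `g • h • g⁻¹ • x i`, so
`g • Ψ h = Ψ (g * h * g⁻¹)` by uniqueness. As `Ψ` is injective, the polynomials fixed by the whole
group, that is, those with coefficients in the base ring, are the `Ψ h` with `h` central.
-/

theorem mem_center_iff_forall_smul_eq {G X : Type*} [Group G] [SMul G X] {f : G → X}
    (hf : Function.Injective f) (hconj : ∀ g h, g • f h = f (g * h * g⁻¹)) {h : G} :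
    h ∈ Subgroup.center G ↔ ∀ g : G, g • f h = f h := by
  simp only [Subgroup.mem_center_iff, hconj, hf.eq_iff, mul_inv_eq_iff_eq_mul]

section Invariants

variable {G R A : Type*} [Group G] [CommRing R] [CommRing A] [Algebra R A]
  [MulSemiringAction G A] [SMulCommClass G R A]

theorem mem_range_algebraMap_iff_forall_smul_eq [Algebra.IsInvariant R A G] {a : A} :
    a ∈ (algebraMap R A).range ↔ ∀ g : G, g • a = a := by
  refine ⟨?_, Algebra.IsInvariant.isInvariant a⟩
  rintro ⟨r, rfl⟩ g
  exact smul_algebraMap g r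

theorem forall_coeff_mem_range_algebraMap_iff [Algebra.IsInvariant R A G] {p : A[X]} :
    (∀ k, p.coeff k ∈ (algebraMap R A).range) ↔ ∀ g : G, g • p = p := by
  simp only [mem_range_algebraMap_iff_forall_smul_eq (G := G), Polynomial.ext_iff, coeff_smul]
  exact forall_comm

variable [IsDomain A] {ι : Type*} [Fintype ι] {x : ι → A}

theorem rootSet_eq_range_of_map_eq_prod {p : R[X]}
    (hp : p.map (algebraMap R A) = ∏ i, (X - C (x i))) : p.rootSet A = Set.range x := by
  have hmonic : (∏ i, (X - C (x i))).Monic := monic_prod_X_sub_C x Finset.univ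
  ext a
  simp [mem_rootSet', ← eval_map_algebraMap, hp, hmonic.ne_zero, eval_prod,
    Finset.prod_eq_zero_iff, sub_eq_zero, eq_comm (a := a)]

theorem smul_mem_range_of_map_eq_prod {p : R[X]}
    (hp : p.map (algebraMap R A) = ∏ i, (X - C (x i))) (g : G) (i : ι) :
    g • x i ∈ Set.range x := by
  rw [← rootSet_eq_range_of_map_eq_prod hp]
  exact smul_mem_rootSet g (rootSet_eq_range_of_map_eq_prod hp ▸ Set.mem_range_self i)

end Invariants

section Generators

variable {K E : Type*} [Field K] [Field E] [Algebra K E]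

theorem algHom_ext_of_intermediateField_adjoin_eq_top {F : Type*} [Semiring F] [Algebra K F]
    {s : Set E} (hs : IntermediateField.adjoin K s = ⊤) {φ ψ : E →ₐ[K] F} (h : Set.EqOn φ ψ s) :
    φ = ψ := by
  have htop : φ.comp (⊤ : IntermediateField K E).val = ψ.comp (⊤ : IntermediateField K E).val :=
    IntermediateField.algHom_ext_of_eq_adjoin K hs.symm h
  ext a
  exact DFunLike.congr_fun htop ⟨a, IntermediateField.mem_top⟩

theorem smul_comp_injective_of_adjoin_eq_top {ι : Type*} {x : ι → E}
    (hx : IntermediateField.adjoin K (Set.range x) = ⊤) :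
    Function.Injective fun (σ : E ≃ₐ[K] E) (i : ι) ↦ σ • x i := fun _ _ hστ ↦
  AlgEquiv.coe_toAlgHom_injective <| algHom_ext_of_intermediateField_adjoin_eq_top hx <|
    Set.forall_mem_range.mpr (congrFun hστ)

end Generators

/-- `p` is the root-permuting polynomial `Ψ_g`: it interpolates the action of `g` at the nodes
`x i` in degree less than their number. This is a predicate rather than a Lagrange formula because
over a ring that is not a field the interpolating polynomial need not exist. -/
structure IsSMulInterpolant {G A ι : Type*} [Semiring A] [SMul G A] [Fintype ι] (x : ι → A) (g : G)
    (p : A[X]) : Prop where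
  degree_lt : p.degree < Fintype.card ι
  eval_eq : ∀ i, p.eval (x i) = g • x i

namespace IsSMulInterpolant

variable {G A ι : Type*} [CommRing A] [Fintype ι] {x : ι → A} {p q : A[X]}

theorem unique [IsDomain A] [SMul G A] (hx : Function.Injective x) {g : G}
    (hp : IsSMulInterpolant x g p) (hq : IsSMulInterpolant x g q) : p = q :=
  eq_of_degrees_lt_of_eval_index_eq Finset.univ hx.injOn hp.degree_lt hq.degree_lt
    fun i _ ↦ (hp.eval_eq i).trans (hq.eval_eq i).symm

theorem smul_conj [Group G] [MulSemiringAction G A] {h : G} (hp : IsSMulInterpolant x h p) (g : G)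
    (hstable : ∀ i, g⁻¹ • x i ∈ Set.range x) :
    IsSMulInterpolant x (g * h * g⁻¹) (g • p) where
  degree_lt := by
    rw [smul_eq_map]
    exact degree_map_le.trans_lt hp.degree_lt
  eval_eq i := by
    obtain ⟨j, hj⟩ := hstable i
    rw [smul_eval, ← hj, hp.eval_eq, hj, smul_smul, smul_smul]

theorem injective_of_smul_comp_injective [SMul G A]
    (hfaithful : Function.Injective fun (g : G) (i : ι) ↦ g • x i) {Ψ : G → A[X]}
    (hΨ : ∀ g, IsSMulInterpolant x g (Ψ g)) : Function.Injective Ψ := by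
  intro g h hgh
  refine hfaithful (funext fun i ↦ ?_)
  simp only [← (hΨ _).eval_eq, hgh]

end IsSMulInterpolant

theorem root_permuting_polynomials_injective_equivariant_center_general
    {G R A ι : Type*} [Group G] [CommRing R] [CommRing A] [IsDomain A] [Algebra R A]
    [MulSemiringAction G A] [SMulCommClass G R A] [Algebra.IsInvariant R A G]
    [Fintype ι] {x : ι → A} (hxinj : Function.Injective x)
    (hstable : ∀ (g : G) (i : ι), g • x i ∈ Set.range x)
    (hfaithful : Function.Injective fun (g : G) (i : ι) ↦ g • x i)
    {Ψ : G → A[X]} (hΨ : ∀ g, IsSMulInterpolant x g (Ψ g)) :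
    Function.Injective Ψ ∧
    (∀ g h : G, (Ψ h).map (MulSemiringAction.toRingHom G A g) = Ψ (g * h * g⁻¹)) ∧
    (∀ h : G,
      (∀ k : ℕ, (Ψ h).coeff k ∈ (algebraMap R A).range) ↔ h ∈ Subgroup.center G) := by
  have hinj : Function.Injective Ψ :=
    IsSMulInterpolant.injective_of_smul_comp_injective hfaithful hΨ
  have hconj (g h : G) : g • Ψ h = Ψ (g * h * g⁻¹) :=
    ((hΨ h).smul_conj g (hstable g⁻¹)).unique hxinj (hΨ (g * h * g⁻¹))
  refine ⟨hinj, fun g h ↦ ?_, fun h ↦ ?_⟩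
  · rw [← hconj, smul_eq_map]
  · rw [mem_center_iff_forall_smul_eq hinj hconj, forall_coeff_mem_range_algebraMap_iff (G := G)]

/-- **Lemma 14.**  Let `E/K` be a Galois extension of fields and `C ∈ K[X]` monic of degree
`d ≥ 2`, with `d` pairwise distinct roots `x₁,…,x_d` in `E` generating `E` over `K`.
For `σ ∈ Gal(E/K)` let `Ψ_σ ∈ E[X]` be the unique polynomial of degree `≤ d-1` with
`Ψ_σ(xᵢ) = σ(xᵢ)`.  Then (1) `σ ↦ Ψ_σ` is injective; (2) applying `θ` to the coefficients
of `Ψ_σ` gives `Ψ_{θσθ⁻¹}`; (3) `Ψ_σ` has all coefficients in `K` iff `σ` is in the center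
of `Gal(E/K)`. -/
theorem root_permuting_polynomials_injective_equivariant_center
    {K E : Type*} [Field K] [Field E] [Algebra K E] [IsGalois K E]
    (d : ℕ) (hd : 2 ≤ d)
    (C : Polynomial K) (hC : C.Monic) (hdeg : C.natDegree = d)
    (x : Fin d → E) (hxinj : Function.Injective x)
    (hsplit : C.map (algebraMap K E) = ∏ i, (X - Polynomial.C (x i)))
    (hgen : IntermediateField.adjoin K (Set.range x) = ⊤)
    (Ψ : (E ≃ₐ[K] E) → Polynomial E)
    (hΨdeg : ∀ σ : E ≃ₐ[K] E, (Ψ σ).degree < d)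
    (hΨeval : ∀ (σ : E ≃ₐ[K] E) (i : Fin d), (Ψ σ).eval (x i) = σ (x i)) :
    Function.Injective Ψ ∧
    (∀ θ σ : E ≃ₐ[K] E,
      (Ψ σ).map (θ : E →+* E) = Ψ (θ * σ * θ⁻¹)) ∧
    (∀ σ : E ≃ₐ[K] E,
      (∀ k : ℕ, (Ψ σ).coeff k ∈ (algebraMap K E).range) ↔
        σ ∈ Subgroup.center (E ≃ₐ[K] E)) :=
  root_permuting_polynomials_injective_equivariant_center_general hxinj
    (smul_mem_range_of_map_eq_prod hsplit) (smul_comp_injective_of_adjoin_eq_top hgen)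
    fun σ ↦ ⟨by simpa only [Fintype.card_fin] using hΨdeg σ, hΨeval σ⟩
end

section
/- With the number-field setup below, let σ be an element of the center of Gal(E/K), let Q be a prime ideal of B, P := Q ∩ A, p := |A/P|, and assume σ(x) ≡ x^p (mod Q) for all x ∈ B. Write Ψ_σ = ∑_{k=0}^{d−1} Ψ_k(σ) X^k. Then each Δ_C·Ψ_k(σ) lies in A, and for every sequence U : ℕ → A of class C one has the congruence in A: Δ_C·U_p ≡ ∑_{k=0}^{d−1} Δ_C·Ψ_k(σ)·U_k (mod P). -/
open Polynomial NumberField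

/-!
Let `V` be the Vandermonde matrix of the roots. Multiplying the values to be interpolated by
`Δ = (det V) ^ 2` makes Lagrange interpolation possible with coefficients in the ring itself, and
even in any ideal containing the values, since `det V • adj V` inverts `V` up to `Δ`.
The scaled interpolant of the values `σ xᵢ` is `Δ Ψ_σ`; since `σ` is central, the Galois group
permutes its nodes and its values compatibly, so its coefficients are Galois invariant.
The polynomial `Δ Ψ_σ - Δ X ^ p` takes the values `Δ (σ xᵢ - xᵢ ^ p)`, so modulo `C` it is congruent
to a scaled interpolant with coefficients in `Q`. Polynomials act on sequences through the shift,
and `C` annihilates the sequences of class `C`; evaluating the two sides at `U` and reading off the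
term of index `0` gives the congruence.
-/

section ScaledInterpolant

variable {R S : Type*} [CommRing R] [CommRing S] {n : ℕ}

theorem det_vandermonde_sq (x : Fin n → R) :
    (Matrix.vandermonde x).det ^ 2 =
      ∏ q ∈ Finset.univ.filter (fun q : Fin n × Fin n => q.1 < q.2), (x q.1 - x q.2) ^ 2 := by
  rw [Matrix.det_vandermonde, Finset.prod_finset_product _ Finset.univ (Finset.Ioi ·) (by simp)]
  simp only [← Finset.prod_pow]
  exact Finset.prod_congr rfl fun i _ => Finset.prod_congr rfl fun j _ => sub_sq_comm _ _

theorem det_vandermonde_comp_perm_sq (x : Fin n → R) (π : Equiv.Perm (Fin n)) :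
    (Matrix.vandermonde (x ∘ π)).det ^ 2 = (Matrix.vandermonde x).det ^ 2 := by
  have hperm : Matrix.vandermonde (x ∘ π) = (Matrix.vandermonde x).submatrix π id := rfl
  rw [hperm, Matrix.det_permute, mul_pow, ← Int.cast_pow, ← Units.val_pow_eq_pow_val, Int.units_sq,
    Units.val_one, Int.cast_one, one_mul]

/-- The scaled Lagrange interpolant: the polynomial of degree less than `n` taking the value
`Δ * b i` at `x i`, where `Δ` is the discriminant of the nodes `x`. The scaling by `Δ` replaces the
inverse of the Vandermonde matrix by a multiple of its adjugate, so no division is needed. -/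
noncomputable def scaledInterpolant (x b : Fin n → R) : R[X] :=
  ∑ j : Fin n,
    C ((Matrix.vandermonde x).det * (Matrix.vandermonde x).adjugate.mulVec b j) * X ^ (j : ℕ)

theorem degree_scaledInterpolant_lt (x b : Fin n → R) : (scaledInterpolant x b).degree < n :=
  degree_sum_fin_lt _

theorem coeff_scaledInterpolant_mem (x : Fin n → R) {b : Fin n → R} {I : Ideal R}
    (hb : ∀ i, b i ∈ I) (k : ℕ) : (scaledInterpolant x b).coeff k ∈ I := by
  rw [scaledInterpolant, finsetSum_coeff]
  refine I.sum_mem fun j _ => ?_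
  rw [coeff_C_mul, Matrix.mulVec, dotProduct]
  exact I.mul_mem_right _ (I.mul_mem_left _ (I.sum_mem fun i _ => I.mul_mem_left _ (hb i)))

theorem eval_scaledInterpolant (x b : Fin n → R) (i : Fin n) :
    (scaledInterpolant x b).eval (x i) = (Matrix.vandermonde x).det ^ 2 * b i := by
  set V := Matrix.vandermonde x
  calc (scaledInterpolant x b).eval (x i)
      = V.det * V.mulVec (V.adjugate.mulVec b) i := by
        rw [scaledInterpolant, eval_finsetSum, Matrix.mulVec, dotProduct, Finset.mul_sum]
        refine Finset.sum_congr rfl fun j _ => ?_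
        rw [eval_C_mul, eval_X_pow, mul_assoc, mul_comm _ (x i ^ _)]
        rfl
    _ = V.det ^ 2 * b i := by
        rw [Matrix.mulVec_mulVec, Matrix.mul_adjugate, Matrix.smul_mulVec, Matrix.one_mulVec,
          Pi.smul_apply, smul_eq_mul, sq, mul_assoc]

theorem map_scaledInterpolant (f : R →+* S) (x b : Fin n → R) :
    (scaledInterpolant x b).map f = scaledInterpolant (f ∘ x) (f ∘ b) := by
  have hV : Matrix.vandermonde (f ∘ x) = f.mapMatrix (Matrix.vandermonde x) := by
    ext i j
    simp [Matrix.vandermonde_apply]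
  have hmulVec (j : Fin n) : f ((Matrix.vandermonde x).adjugate.mulVec b j) =
      (Matrix.vandermonde (f ∘ x)).adjugate.mulVec (f ∘ b) j := by
    rw [RingHom.map_mulVec, hV, ← RingHom.map_adjugate, RingHom.mapMatrix_apply]
  simp only [scaledInterpolant, Polynomial.map_sum, Polynomial.map_mul, map_C, Polynomial.map_pow,
    map_X, map_mul f, hmulVec, RingHom.map_det, ← hV]

theorem map_scaledInterpolant_eq_C_mul [IsDomain S] {f : R →+* S} {x b : Fin n → R}
    (hfx : Function.Injective (f ∘ x)) {Ψ : S[X]} (hdeg : Ψ.degree < n)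
    (heval : ∀ i, Ψ.eval (f (x i)) = f (b i)) :
    (scaledInterpolant x b).map f = C (f ((Matrix.vandermonde x).det ^ 2)) * Ψ := by
  refine eq_of_degrees_lt_of_eval_index_eq Finset.univ hfx.injOn ?_ ?_ fun i _ => ?_
  · simpa using degree_map_le.trans_lt (degree_scaledInterpolant_lt x b)
  · rw [← smul_eq_C_mul, Finset.card_fin]
    exact (degree_smul_le _ _).trans_lt hdeg
  · rw [Function.comp_apply, eval_map_apply, eval_scaledInterpolant, eval_C_mul, heval, map_mul]

theorem scaledInterpolant_comp_perm [IsDomain R] {x : Fin n → R} (hx : Function.Injective x)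
    (b : Fin n → R) (π : Equiv.Perm (Fin n)) :
    scaledInterpolant (x ∘ π) (b ∘ π) = scaledInterpolant x b := by
  refine eq_of_degrees_lt_of_eval_index_eq Finset.univ (hx.comp π.injective).injOn ?_ ?_
    fun i _ => ?_
  · simpa using degree_scaledInterpolant_lt (x ∘ π) (b ∘ π)
  · simpa using degree_scaledInterpolant_lt x b
  · rw [eval_scaledInterpolant, det_vandermonde_comp_perm_sq]
    exact (eval_scaledInterpolant x b (π i)).symm

end ScaledInterpolant

section Invariants

variable {A B G : Type*} [CommRing A] [CommRing B] [IsDomain B] [Algebra A B] [Group G]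
  [MulSemiringAction G B]

theorem exists_perm_smul_eq {ι : Type*} [Fintype ι] [SMulCommClass G A B] {f : A[X]} {x : ι → B}
    (hx : Function.Injective x) (hf : f.map (algebraMap A B) = ∏ i, (X - C (x i))) (g : G) :
    ∃ π : Equiv.Perm ι, ∀ i, g • x i = x (π i) := by
  have haeval (b : B) : aeval b f = ∏ j, (b - x j) := by
    simp only [← eval_map_algebraMap, hf, eval_prod, eval_sub, eval_X, eval_C]
  have hperm (i : ι) : ∃ j, g • x i = x j := by
    have hroot : aeval (g • x i) f = 0 := by
      rw [aeval_smul, haeval, Finset.prod_eq_zero (Finset.mem_univ i) (sub_self _), smul_zero]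
    obtain ⟨j, -, hj⟩ := Finset.prod_eq_zero_iff.1 (haeval _ ▸ hroot)
    exact ⟨j, sub_eq_zero.1 hj⟩
  choose π hπ using hperm
  have hinj : Function.Injective π := fun i j hij =>
    hx (smul_left_cancel g (by rw [hπ, hπ, hij]))
  exact ⟨Equiv.ofBijective π (Finite.injective_iff_bijective.1 hinj), hπ⟩

theorem exists_algebraMap_eq_coeff_scaledInterpolant [SMulCommClass G A B]
    [Algebra.IsInvariant A B G] {n : ℕ} {f : A[X]} {x : Fin n → B} (hx : Function.Injective x)
    (hf : f.map (algebraMap A B) = ∏ i, (X - C (x i))) {σ : G} (hσ : σ ∈ Subgroup.center G)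
    (k : ℕ) : ∃ a : A, algebraMap A B a = (scaledInterpolant x (σ • x)).coeff k := by
  refine Algebra.IsInvariant.isInvariant (G := G) _ fun g => ?_
  obtain ⟨π, hπ⟩ := exists_perm_smul_eq hx hf g
  have hnodes : MulSemiringAction.toRingHom G B g ∘ x = x ∘ π := funext hπ
  have hvalues : MulSemiringAction.toRingHom G B g ∘ (σ • x) = (σ • x) ∘ π := funext fun i =>
    calc g • σ • x i = σ • g • x i := by
          rw [smul_smul, smul_smul, Subgroup.mem_center_iff.1 hσ g]
      _ = σ • x (π i) := by rw [hπ]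
  rw [← MulSemiringAction.toRingHom_apply, ← coeff_map, map_scaledInterpolant, hnodes, hvalues,
    scaledInterpolant_comp_perm hx]

end Invariants

section Shift

variable {R : Type*} [CommRing R]

variable (R) in
/-- The shift operator `u ↦ (n ↦ u (n + 1))` on sequences. A linear recurrence with characteristic
polynomial `f` is the equation `aeval (sequenceShift R) f u = 0`. -/
def sequenceShift : Module.End R (ℕ → R) :=
  LinearMap.funLeft R R Nat.succ

theorem sequenceShift_pow_apply (k : ℕ) (u : ℕ → R) (m : ℕ) :
    (sequenceShift R ^ k) u m = u (m + k) := by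
  induction k generalizing m with
  | zero => rfl
  | succ k ih =>
    rw [pow_succ', Module.End.mul_apply, sequenceShift, LinearMap.funLeft_apply, ← sequenceShift,
      ih, Nat.succ_add_eq_add_succ]

theorem aeval_sequenceShift_apply {f : R[X]} {N : ℕ} (hN : f.degree < N) (u : ℕ → R) (m : ℕ) :
    aeval (sequenceShift R) f u m = ∑ k ∈ Finset.range N, f.coeff k * u (m + k) := by
  rcases eq_or_ne f 0 with rfl | hf
  · simp
  simp only [aeval_eq_sum_range' ((natDegree_lt_iff_degree_lt hf).2 hN), LinearMap.sum_apply,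
    LinearMap.smul_apply, Finset.sum_apply, Pi.smul_apply, sequenceShift_pow_apply, smul_eq_mul]

theorem aeval_sequenceShift_map_eq_zero {S : Type*} [CommRing S] {φ : S →+* R} {f : S[X]} {N : ℕ}
    (hN : (f.map φ).degree < N) {u : ℕ → S}
    (hu : ∀ m, ∑ k ∈ Finset.range N, f.coeff k * u (m + k) = 0) :
    aeval (sequenceShift R) (f.map φ) (φ ∘ u) = 0 := by
  funext m
  simp only [aeval_sequenceShift_apply hN, coeff_map, Function.comp_apply, ← map_mul, ← map_sum,
    hu, map_zero, Pi.zero_apply]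

theorem aeval_sequenceShift_eq_zero_of_dvd {f g : R[X]} (hfg : f ∣ g) {u : ℕ → R}
    (hu : aeval (sequenceShift R) f u = 0) : aeval (sequenceShift R) g u = 0 := by
  obtain ⟨h, rfl⟩ := hfg
  rw [mul_comm, map_mul, Module.End.mul_apply, hu, map_zero]

theorem aeval_sequenceShift_mem {f : R[X]} {I : Ideal R} (hf : ∀ k, f.coeff k ∈ I) (u : ℕ → R)
    (m : ℕ) : aeval (sequenceShift R) f u m ∈ I := by
  rw [aeval_sequenceShift_apply
    (degree_le_natDegree.trans_lt (WithBot.coe_lt_coe.2 f.natDegree.lt_succ_self))]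
  exact I.sum_mem fun k _ => I.mul_mem_right _ (hf k)

end Shift

section Congruence

variable {R : Type*} [CommRing R] [IsDomain R]

theorem prod_X_sub_C_dvd_of_eval_eq_zero {ι : Type*} [Fintype ι] {x : ι → R}
    (hx : Function.Injective x) {f : R[X]} (hf : ∀ i, f.eval (x i) = 0) :
    ∏ i, (X - C (x i)) ∣ f := by
  rcases eq_or_ne f 0 with rfl | hf0
  · exact dvd_zero _
  have hroots : Finset.univ.val.map x ≤ f.roots := by
    rw [Multiset.le_iff_subset (Finset.univ.nodup.map hx)]
    intro a ha
    obtain ⟨i, -, rfl⟩ := Multiset.mem_map.1 ha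
    exact (mem_roots hf0).2 (hf i)
  have := (Multiset.prod_X_sub_C_dvd_iff_le_roots hf0 _).2 hroots
  rwa [Multiset.map_map] at this

variable {n : ℕ} {x : Fin n → R} (hx : Function.Injective x) {u : ℕ → R}
  (hu : aeval (sequenceShift R) (∏ i, (X - C (x i))) u = 0) {I : Ideal R}
include hx hu

theorem aeval_sequenceShift_mem_of_eval_eq {f : R[X]} {b : Fin n → R} (hb : ∀ i, b i ∈ I)
    (hf : ∀ i, f.eval (x i) = (Matrix.vandermonde x).det ^ 2 * b i) (m : ℕ) :
    aeval (sequenceShift R) f u m ∈ I := by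
  have hdvd : ∏ i, (X - C (x i)) ∣ f - scaledInterpolant x b :=
    prod_X_sub_C_dvd_of_eval_eq_zero hx fun i => by
      rw [eval_sub, hf, eval_scaledInterpolant, sub_self]
  have hsub := aeval_sequenceShift_eq_zero_of_dvd hdvd hu
  rw [map_sub, LinearMap.sub_apply, sub_eq_zero] at hsub
  rw [hsub]
  exact aeval_sequenceShift_mem (coeff_scaledInterpolant_mem x hb) u m

theorem det_vandermonde_sq_mul_sub_sum_mem {p : ℕ} {b : Fin n → R}
    (hb : ∀ i, b i - x i ^ p ∈ I) (m : ℕ) :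
    (Matrix.vandermonde x).det ^ 2 * u (m + p) -
      ∑ k : Fin n, (scaledInterpolant x b).coeff k * u (m + k) ∈ I := by
  set Δ := (Matrix.vandermonde x).det ^ 2
  have heval (i : Fin n) :
      (scaledInterpolant x b - C Δ * X ^ p).eval (x i) = Δ * (b i - x i ^ p) := by
    rw [eval_sub, eval_scaledInterpolant, eval_C_mul, eval_X_pow, mul_sub]
  have hmem := aeval_sequenceShift_mem_of_eval_eq hx hu hb heval m
  rw [← neg_mem_iff, neg_sub]
  simpa [aeval_sequenceShift_apply (degree_scaledInterpolant_lt x b), sequenceShift_pow_apply,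
    Finset.sum_range] using hmem

end Congruence

theorem central_frobenius_congruence_general
    {A B E G : Type*} [CommRing A] [CommRing B] [CommRing E] [IsDomain E]
    [Algebra A B] [Algebra B E] [Algebra A E] [IsScalarTower A B E] [FaithfulSMul B E]
    [Group G] [MulSemiringAction G B] [SMulCommClass G A B] [Algebra.IsInvariant A B G]
    {d : ℕ} {C : A[X]} {x : Fin d → B} (hx : Function.Injective x)
    (hsplit : C.map (algebraMap A B) = ∏ i, (X - Polynomial.C (x i)))
    {Δ : A} (hΔ : algebraMap A B Δ = (Matrix.vandermonde x).det ^ 2)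
    {σ : G} (hσ : σ ∈ Subgroup.center G)
    {Ψ : E[X]} (hΨdeg : Ψ.degree < d)
    (hΨeval : ∀ i, Ψ.eval (algebraMap B E (x i)) = algebraMap B E (σ • x i))
    {Q : Ideal B} {p : ℕ} (hFrob : ∀ i, σ • x i - x i ^ p ∈ Q) :
    (∀ k : ℕ, ∃ a : A, algebraMap A E a = algebraMap A E Δ * Ψ.coeff k) ∧
    (∀ w : Fin d → A,
      (∀ k : Fin d, algebraMap A E (w k) = algebraMap A E Δ * Ψ.coeff k) →
      ∀ U : ℕ → A, (∀ n : ℕ, ∑ k ∈ Finset.range (d + 1), C.coeff k * U (n + k) = 0) →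
        Δ * U p - ∑ k : Fin d, w k * U k ∈ Q.comap (algebraMap A B)) := by
  have hinj : Function.Injective (algebraMap B E) := FaithfulSMul.algebraMap_injective B E
  have : IsDomain B := hinj.isDomain (algebraMap B E)
  have hcoeff (k : ℕ) : algebraMap A E Δ * Ψ.coeff k =
      algebraMap B E ((scaledInterpolant x (σ • x)).coeff k) := by
    rw [← coeff_map, map_scaledInterpolant_eq_C_mul (b := σ • x) (hinj.comp hx) hΨdeg hΨeval,
      coeff_C_mul, ← hΔ, ← IsScalarTower.algebraMap_apply]
  refine ⟨fun k => ?_, fun w hw U hU => ?_⟩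
  · obtain ⟨a, ha⟩ := exists_algebraMap_eq_coeff_scaledInterpolant hx hsplit hσ k
    exact ⟨a, by rw [hcoeff, ← ha, ← IsScalarTower.algebraMap_apply]⟩
  · have hwcoeff (k : Fin d) : algebraMap A B (w k) = (scaledInterpolant x (σ • x)).coeff k :=
      hinj (by rw [← hcoeff, ← hw, ← IsScalarTower.algebraMap_apply])
    have hCdeg : (C.map (algebraMap A B)).degree < (d + 1 : ℕ) := by
      rw [hsplit, degree_prod]
      simp only [degree_X_sub_C, Finset.sum_const, Finset.card_fin, nsmul_eq_mul, mul_one]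
      exact_mod_cast d.lt_succ_self
    have hu : aeval (sequenceShift B) (∏ i, (X - Polynomial.C (x i))) (algebraMap A B ∘ U) = 0 :=
      hsplit ▸ aeval_sequenceShift_map_eq_zero hCdeg hU
    have hmem := det_vandermonde_sq_mul_sub_sum_mem hx hu (b := σ • x) hFrob 0
    simpa [← hΔ, ← hwcoeff] using hmem

/-- **Theorem 4, points 2 & 3.**  Set-up: `E/K` Galois extension of number fields,
`C ∈ 𝓞 K [X]` monic of degree `d ≥ 2` with distinct roots `x₁,…,x_d ∈ 𝓞 E` generating
`E/K`, `Δ = ∏_{i<j}(xᵢ-xⱼ)² ∈ 𝓞 K`.  Let `σ` be in the center of `Gal(E/K)`, `Q` a prime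
of `𝓞 E`, `P = Q ∩ 𝓞 K`, `p = |𝓞 K / P|`, with `σ(x) ≡ x^p (mod Q)` for all `x ∈ 𝓞 E`.
Writing `Ψ_σ = ∑_{k<d} Ψ_k(σ) X^k` for the root-permuting polynomial of `σ`, each
`Δ·Ψ_k(σ)` lies in `𝓞 K`, and for every sequence `U : ℕ → 𝓞 K` of class `C` one has
`Δ·U_p ≡ ∑_{k<d} (Δ·Ψ_k(σ))·U_k (mod P)`. -/
theorem central_frobenius_congruence
    {K E : Type*} [Field K] [NumberField K] [Field E] [NumberField E]
    [Algebra K E] [IsGalois K E]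
    (d : ℕ) (hd : 2 ≤ d)
    (C : Polynomial (𝓞 K)) (hC : C.Monic) (hdeg : C.natDegree = d)
    (x : Fin d → 𝓞 E) (hxinj : Function.Injective x)
    (hsplit : C.map (algebraMap (𝓞 K) (𝓞 E)) = ∏ i, (X - Polynomial.C (x i)))
    (hgen : IntermediateField.adjoin K
      (Set.range fun i => (algebraMap (𝓞 E) E (x i))) = ⊤)
    (Δ : 𝓞 K)
    (hΔ : algebraMap (𝓞 K) (𝓞 E) Δ =
      ∏ q ∈ Finset.univ.filter (fun q : Fin d × Fin d => q.1 < q.2), (x q.1 - x q.2) ^ 2)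
    (σ : E ≃ₐ[K] E) (hσ : σ ∈ Subgroup.center (E ≃ₐ[K] E))
    (Ψ : Polynomial E) (hΨdeg : Ψ.degree < d)
    (hΨeval : ∀ i, Ψ.eval (algebraMap (𝓞 E) E (x i)) = σ (algebraMap (𝓞 E) E (x i)))
    (Q : Ideal (𝓞 E)) (hQ : Q.IsPrime) (hQbot : Q ≠ ⊥)
    (P : Ideal (𝓞 K)) (hP : P = Ideal.comap (algebraMap (𝓞 K) (𝓞 E)) Q)
    (p : ℕ) (hp : p = Nat.card (𝓞 K ⧸ P))
    (hFrob : ∀ b : 𝓞 E, ∃ q ∈ Q, algebraMap (𝓞 E) E q =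
      σ (algebraMap (𝓞 E) E b) - (algebraMap (𝓞 E) E b) ^ p) :
    (∀ k : ℕ, ∃ a : 𝓞 K,
      algebraMap (𝓞 K) E a = algebraMap (𝓞 K) E Δ * Ψ.coeff k) ∧
    (∀ w : Fin d → 𝓞 K,
      (∀ k : Fin d, algebraMap (𝓞 K) E (w k) = algebraMap (𝓞 K) E Δ * Ψ.coeff k) →
      ∀ U : ℕ → 𝓞 K,
        (∀ n : ℕ, ∑ k ∈ Finset.range (d + 1), C.coeff k * U (n + k) = 0) →
        Δ * U p - ∑ k : Fin d, w k * U k ∈ P) := by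
  have hQmem (i : Fin d) : σ • x i - x i ^ p ∈ Q := by
    obtain ⟨q, hq, h⟩ := hFrob (x i)
    exact (RingOfIntegers.ext h : q = σ • x i - x i ^ p) ▸ hq
  exact hP ▸ central_frobenius_congruence_general hxinj hsplit
    (hΔ.trans (det_vandermonde_sq x).symm) hσ hΨdeg hΨeval hQmem
end

section
/- With the number-field setup below, let P be a prime ideal of A with Δ_C ∉ P and let Q be a prime ideal of B lying above P. Then the residue field B/Q is generated as an algebra over the residue field A/P by the images of the roots x₁,…,x_d of C, i.e. B/Q = (A/P)[x̄₁,…,x̄_d]. -/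
open Polynomial NumberField

/-!
Let a finite group `G` act on `B` with invariants `A`, permuting the `x i` and acting faithfully on
them, and put `S = A[x i]`. For each `g ≠ 1` choose `u g` among the `x i` with `g • u g ≠ u g`. Then
`F σ = ∏ g ≠ 1, (σ • u g - g • u g)` vanishes unless `σ = 1`, so `∑ σ, F σ * σ • b = F 1 * b`.
Expanding the product writes the left side as an `S`-linear combination of traces of elements of
`B`, and these traces lie in `A`. Hence `F 1 * b ∈ S`, and each factor of `F 1` is a difference of
two distinct `x i`, so that `F 1` divides a power of the discriminant `Δ` in `S`. Thus a power of
`Δ` multiplies `B` into `S`, and modulo an ideal where `Δ` is a unit, `B` and `S` have the same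
image.
-/

section Trace

variable {A B G : Type*} [CommRing A] [CommRing B] [Algebra A B]
  [Group G] [MulSemiringAction G B] [Algebra.IsInvariant A B G]

theorem sum_smul_mem [Fintype G] (S : Subalgebra A B) (b : B) :
    ∑ σ : G, σ • b ∈ S := by
  have invariant (g : G) : g • ∑ σ : G, σ • b = ∑ σ : G, σ • b := by
    simp only [Finset.smul_sum, smul_smul]
    exact Equiv.sum_comp (Equiv.mulLeft g) fun σ : G ↦ σ • b
  obtain ⟨a, ha⟩ := Algebra.IsInvariant.isInvariant (A := A) _ invariant
  exact ha ▸ S.algebraMap_mem a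

theorem sum_prod_smul_sub_mul_smul_mem [Fintype G] (S : Subalgebra A B) {κ : Type*} (s : Finset κ)
    (u : κ → B) {v : κ → B} (hv : ∀ k ∈ s, v k ∈ S) (b : B) :
    ∑ σ : G, (∏ k ∈ s, (σ • u k - v k)) * σ • b ∈ S := by
  induction s using Finset.cons_induction generalizing b with
  | empty => simpa only [Finset.prod_empty, one_mul] using sum_smul_mem S b
  | cons k s hk ih =>
    rw [Finset.forall_mem_cons] at hv
    have expand : ∑ σ : G, (∏ j ∈ s.cons k hk, (σ • u j - v j)) * σ • b =
        ∑ σ : G, (∏ j ∈ s, (σ • u j - v j)) * σ • (u k * b) -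
          v k * ∑ σ : G, (∏ j ∈ s, (σ • u j - v j)) * σ • b := by
      rw [Finset.mul_sum, ← Finset.sum_sub_distrib]
      refine Finset.sum_congr rfl fun σ _ ↦ ?_
      rw [Finset.prod_cons, smul_mul']
      ring
    rw [expand]
    exact S.sub_mem (ih hv.2 _) (S.mul_mem hv.1 (ih hv.2 b))

theorem prod_sub_smul_mul_mem [Fintype G] [DecidableEq G] (S : Subalgebra A B)
    (u : {g : G // g ≠ 1} → B) (hu : ∀ g, g.1 • u g ∈ S) (b : B) :
    (∏ g, (u g - g.1 • u g)) * b ∈ S := by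
  have collapse : ∑ σ : G, (∏ g, (σ • u g - g.1 • u g)) * σ • b =
      (∏ g, (u g - g.1 • u g)) * b := by
    rw [Fintype.sum_eq_single (1 : G)]
    · simp only [one_smul]
    · intro σ hσ
      rw [Finset.prod_eq_zero (Finset.mem_univ ⟨σ, hσ⟩) (sub_self _), zero_mul]
  exact collapse ▸ sum_prod_smul_sub_mul_smul_mem S _ u (fun g _ ↦ hu g) b

theorem pow_card_sub_one_smul_mem [Finite G] (S : Subalgebra A B) {a : A}
    (h : ∀ g : G, g ≠ 1 → ∃ u v : S, g • (u : B) = v ∧ u - v ∣ algebraMap A S a) (b : B) :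
    a ^ (Nat.card G - 1) • b ∈ S := by
  classical
  have := Fintype.ofFinite G
  choose u v huv hdvd using fun g : {g : G // g ≠ 1} ↦ h g g.2
  obtain ⟨c, hc⟩ : ∏ g, (u g - v g) ∣ algebraMap A S a ^ (Nat.card G - 1) := by
    have hcard : Fintype.card {g : G // g ≠ 1} = Nat.card G - 1 := by
      rw [Fintype.card_subtype_compl, Fintype.card_subtype_eq, Nat.card_eq_fintype_card]
    rw [← hcard, ← Finset.card_univ, ← Finset.prod_const]
    exact Finset.prod_dvd_prod_of_dvd _ _ fun g _ ↦ hdvd g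
  have hmem : (∏ g, ((u g : B) - v g)) * b ∈ S := by
    simpa only [huv] using
      prod_sub_smul_mul_mem S (fun g ↦ (u g : B)) (fun g ↦ huv g ▸ (v g).2) b
  have hprod : a ^ (Nat.card G - 1) • b = c * ((∏ g, ((u g : B) - v g)) * b) := by
    have := congrArg (Subalgebra.val S) hc
    simp only [map_pow, map_mul, map_prod, map_sub, Subalgebra.coe_val, AlgHom.commutes] at this
    rw [Algebra.smul_def, map_pow, this]
    ring
  exact hprod ▸ S.mul_mem c.2 hmem

end Trace

theorem sub_dvd_prod_filter_lt_sub_sq {R ι : Type*} [CommRing R] [Fintype ι] [LinearOrder ι]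
    (x : ι → R) {i j : ι} (hij : i ≠ j) :
    x i - x j ∣ ∏ q ∈ Finset.univ.filter (fun q : ι × ι => q.1 < q.2), (x q.1 - x q.2) ^ 2 := by
  wlog h : i < j generalizing i j
  · rw [← neg_sub, neg_dvd]
    exact this hij.symm (hij.symm.lt_of_le (not_lt.1 h))
  · have hmem : (i, j) ∈ Finset.univ.filter fun q : ι × ι => q.1 < q.2 := by simpa using h
    exact (dvd_pow_self _ two_ne_zero).trans
      (Finset.dvd_prod_of_mem (fun q : ι × ι => (x q.1 - x q.2) ^ 2) hmem)

section Roots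

variable {A B ι : Type*} [CommRing A] [CommRing B] [Algebra A B]

theorem prod_sub_sq_pow_smul_mem_adjoin [Fintype ι] [LinearOrder ι]
    {G : Type*} [Group G] [Finite G] [MulSemiringAction G B] [Algebra.IsInvariant A B G]
    {x : ι → B} (hperm : ∀ (g : G) i, g • x i ∈ Set.range x)
    (hfaithful : ∀ g : G, (∀ i, g • x i = x i) → g = 1) {Δ : A}
    (hΔ : algebraMap A B Δ =
      ∏ q ∈ Finset.univ.filter (fun q : ι × ι => q.1 < q.2), (x q.1 - x q.2) ^ 2) (b : B) :
    Δ ^ (Nat.card G - 1) • b ∈ Algebra.adjoin A (Set.range x) := by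
  let y (i : ι) : Algebra.adjoin A (Set.range x) := ⟨x i, Algebra.subset_adjoin ⟨i, rfl⟩⟩
  have hΔy : algebraMap A (Algebra.adjoin A (Set.range x)) Δ =
      ∏ q ∈ Finset.univ.filter (fun q : ι × ι => q.1 < q.2), (y q.1 - y q.2) ^ 2 :=
    Subtype.ext (by simpa [y] using hΔ)
  refine pow_card_sub_one_smul_mem _ (fun g hg ↦ ?_) b
  obtain ⟨i, hi⟩ : ∃ i, g • x i ≠ x i := not_forall.1 (mt (hfaithful g) hg)
  obtain ⟨j, hj⟩ := hperm g i
  have hij : i ≠ j := by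
    rintro rfl
    exact hi hj.symm
  exact ⟨y i, y j, hj.symm, hΔy ▸ sub_dvd_prod_filter_lt_sub_sq y hij⟩

theorem smul_mem_range_of_map_eq_prod_X_sub_C [IsDomain B] [Fintype ι]
    {M : Type*} [Monoid M] [MulSemiringAction M B] [SMulCommClass M A B] {C : A[X]} {x : ι → B}
    (hC : C.map (algebraMap A B) = ∏ i, (X - Polynomial.C (x i))) (m : M) (i : ι) :
    m • x i ∈ Set.range x := by
  have aeval_eq (b : B) : aeval b C = ∏ j, (b - x j) := by
    rw [← eval_map_algebraMap, hC, eval_prod]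
    simp only [eval_sub, eval_X, eval_C]
  have root : aeval (m • x i) C = 0 := by
    rw [aeval_smul, aeval_eq, Finset.prod_eq_zero (Finset.mem_univ i) (sub_self _), smul_zero]
  obtain ⟨j, -, hj⟩ := Finset.prod_eq_zero_iff.1 ((aeval_eq _).symm.trans root)
  exact ⟨j, (sub_eq_zero.1 hj).symm⟩

end Roots

theorem adjoin_image_eq_top_of_isUnit {A B R T : Type*} [CommRing A] [CommRing B] [CommRing R]
    [CommRing T] [Algebra A B] [Algebra A R] [Algebra A T] [Algebra R T] [IsScalarTower A R T]
    {f : B →ₐ[A] T} (hf : Function.Surjective f) {s : Set B} {a : A}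
    (ha : IsUnit (algebraMap A R a)) (hs : ∀ b, a • b ∈ Algebra.adjoin A s) :
    Algebra.adjoin R (f '' s) = ⊤ := by
  refine eq_top_iff.2 fun t _ ↦ ?_
  obtain ⟨b, rfl⟩ := hf t
  obtain ⟨r, hr⟩ := ha.exists_left_inv
  have hmem : a • f b ∈ Algebra.adjoin R (f '' s) := by
    have hfab : f (a • b) ∈ (Algebra.adjoin A s).map f := Subalgebra.mem_map.2 ⟨_, hs b, rfl⟩
    rw [f.map_adjoin, map_smul] at hfab
    have hadjoin : Algebra.adjoin A (f '' s) ≤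
        (Algebra.adjoin R (f '' s)).restrictScalars A :=
      Algebra.adjoin_le Algebra.subset_adjoin
    exact hadjoin hfab
  have hfb : f b = r • a • f b := by
    rw [← algebraMap_smul R a (f b), smul_smul, hr, one_smul]
  exact hfb ▸ Subalgebra.smul_mem _ hmem r

theorem algEquiv_eq_one_of_adjoin_eq_top {F E : Type*} [Field F] [Field E] [Algebra F E] {s : Set E}
    (hs : IntermediateField.adjoin F s = ⊤) {g : Gal(E/F)} (hg : ∀ y ∈ s, g y = y) : g = 1 := by
  have hrestrict : (g : E →ₐ[F] E).comp (IntermediateField.adjoin F s).val =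
      (IntermediateField.adjoin F s).val :=
    IntermediateField.adjoin_algHom_ext F hg
  ext y
  exact DFunLike.congr_fun hrestrict ⟨y, hs ▸ IntermediateField.mem_top⟩

theorem residue_field_generated_by_roots_general
    {A B ι : Type*} [CommRing A] [CommRing B] [Algebra A B] [Fintype ι] [LinearOrder ι]
    (G : Type*) [Group G] [Finite G] [MulSemiringAction G B] [Algebra.IsInvariant A B G]
    {x : ι → B} (hperm : ∀ (g : G) i, g • x i ∈ Set.range x)
    (hfaithful : ∀ g : G, (∀ i, g • x i = x i) → g = 1) {Δ : A}
    (hΔ : algebraMap A B Δ =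
      ∏ q ∈ Finset.univ.filter (fun q : ι × ι => q.1 < q.2), (x q.1 - x q.2) ^ 2)
    {I : Ideal A} (hI : IsUnit (Ideal.Quotient.mk I Δ)) {J : Ideal B}
    (hle : I ≤ J.comap (algebraMap A B)) :
    letI : Algebra (A ⧸ I) (B ⧸ J) := Ideal.Quotient.algebraQuotientOfLEComap hle
    Algebra.adjoin (A ⧸ I) (Set.range fun i => Ideal.Quotient.mk J (x i)) = ⊤ := by
  let _ : Algebra (A ⧸ I) (B ⧸ J) := Ideal.Quotient.algebraQuotientOfLEComap hle
  have : IsScalarTower A (A ⧸ I) (B ⧸ J) := .of_algebraMap_eq fun _ ↦ rfl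
  have hunit : IsUnit (algebraMap A (A ⧸ I) (Δ ^ (Nat.card G - 1))) := by
    rw [map_pow]
    exact hI.pow _
  change Algebra.adjoin (A ⧸ I) (Set.range (Ideal.Quotient.mkₐ A J ∘ x)) = ⊤
  rw [Set.range_comp]
  exact adjoin_image_eq_top_of_isUnit (Ideal.Quotient.mkₐ_surjective A J) hunit
    (prod_sub_sq_pow_smul_mem_adjoin hperm hfaithful hΔ)

/-- **Lemma 16.**  Set-up: `E/K` Galois extension of number fields, `C ∈ 𝓞 K [X]` monic of
degree `d ≥ 2` with distinct roots `x₁,…,x_d ∈ 𝓞 E` generating `E/K`, `Δ` its discriminant.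
If `P` is a prime of `𝓞 K` with `Δ ∉ P` and `Q` a prime of `𝓞 E` above `P`, then the residue
field `𝓞 E / Q` is generated over `𝓞 K / P` by the images of the roots:
`𝓞 E / Q = (𝓞 K / P)[x̄₁, …, x̄_d]`. -/
theorem residue_field_generated_by_roots
    {K E : Type*} [Field K] [NumberField K] [Field E] [NumberField E]
    [Algebra K E] [IsGalois K E]
    (d : ℕ) (hd : 2 ≤ d)
    (C : Polynomial (𝓞 K)) (hC : C.Monic) (hdeg : C.natDegree = d)
    (x : Fin d → 𝓞 E) (hxinj : Function.Injective x)
    (hsplit : C.map (algebraMap (𝓞 K) (𝓞 E)) = ∏ i, (X - Polynomial.C (x i)))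
    (hgen : IntermediateField.adjoin K
      (Set.range fun i => (algebraMap (𝓞 E) E (x i))) = ⊤)
    (Δ : 𝓞 K)
    (hΔ : algebraMap (𝓞 K) (𝓞 E) Δ =
      ∏ q ∈ Finset.univ.filter (fun q : Fin d × Fin d => q.1 < q.2), (x q.1 - x q.2) ^ 2)
    (P : Ideal (𝓞 K)) (hPprime : P.IsPrime) (hPbot : P ≠ ⊥) (hPΔ : Δ ∉ P)
    (Q : Ideal (𝓞 E)) (hQprime : Q.IsPrime)
    (hle : P ≤ Ideal.comap (algebraMap (𝓞 K) (𝓞 E)) Q)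
    (hQP : Ideal.comap (algebraMap (𝓞 K) (𝓞 E)) Q = P) :
    letI : Algebra (𝓞 K ⧸ P) (𝓞 E ⧸ Q) := Ideal.Quotient.algebraQuotientOfLEComap hle
    Algebra.adjoin (𝓞 K ⧸ P) (Set.range fun i => Ideal.Quotient.mk Q (x i)) = ⊤ := by
  have := hPprime.isMaximal hPbot
  have := IsGaloisGroup.of_isFractionRing Gal(E/K) (𝓞 K) (𝓞 E) K E
  have hunit : IsUnit (Ideal.Quotient.mk P Δ) := by
    let _ := Ideal.Quotient.field P
    exact isUnit_iff_ne_zero.2 (mt Ideal.Quotient.eq_zero_iff_mem.1 hPΔ)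
  have hfaithful (g : Gal(E/K)) (hg : ∀ i, g • x i = x i) : g = 1 :=
    algEquiv_eq_one_of_adjoin_eq_top hgen <|
      Set.forall_mem_range.2 fun i ↦ congrArg (algebraMap (𝓞 E) E) (hg i)
  exact residue_field_generated_by_roots_general Gal(E/K)
    (smul_mem_range_of_map_eq_prod_X_sub_C hsplit) hfaithful hΔ hunit hle
end

section
/- Let M ≥ 1 and n ∈ ℕ, and let d := gcd(n, M). Then the sum over all primitive M-th roots of unity z in ℂ of z^n equals (φ(M)/φ(M/d))·μ(M/d), where φ is Euler's totient function and μ is the Möbius function. In particular (d = M, i.e. M ∣ n) the sum equals φ(M); if gcd(n, M) = 1 the sum equals μ(M). -/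
/-!
Fix a primitive `M`-th root of unity `ζ` and let `e = M / gcd(n, M)`. The primitive `M`-th roots are
the powers `ζ ^ u` with `u ∈ (ℤ/M)ˣ`, and `(ζ ^ u) ^ n = (ζ ^ n) ^ u` depends only on the image of
`u` in `(ℤ/e)ˣ`, because `ζ ^ n` is a primitive `e`-th root. Reduction `(ℤ/M)ˣ → (ℤ/e)ˣ` is a
surjective group homomorphism, so all its fibres have `φ(M) / φ(e)` elements, and the sum is this
ratio times the sum of the primitive `e`-th roots. The latter is `μ(e)` by Möbius inversion, since
the sum of all `m`-th roots of unity vanishes unless `m = 1`.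
-/

open Finset Polynomial

theorem sum_comp_monoidHom_of_surjective {G H A : Type*} [Group G] [Group H] [Fintype G]
    [Fintype H] [AddCommMonoid A] {f : G →* H} (hf : Function.Surjective f) (F : H → A) :
    ∑ g, F (f g) = (Fintype.card G / Fintype.card H) • ∑ h, F h := by
  classical
  have card_fiber (h : H) : #{g | f g = h} = #{g | f g = 1} :=
    MonoidHom.card_fiber_eq_of_mem_range f (hf h) (hf 1)
  have card_eq : Fintype.card G = Fintype.card H * #{g | f g = 1} := by
    rw [← card_univ, card_eq_sum_card_fiberwise (f := f) (t := univ) (by simp),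
      sum_congr rfl fun h _ ↦ card_fiber h, sum_const, smul_eq_mul, card_univ]
  rw [card_eq, Nat.mul_div_cancel_left _ Fintype.card_pos, smul_sum,
    ← sum_fiberwise univ f fun g ↦ F (f g)]
  refine sum_congr rfl fun h _ ↦ ?_
  rw [← card_fiber h, ← sum_const]
  exact sum_congr rfl fun g hg ↦ congrArg F (mem_filter.1 hg).2

theorem isPrimitiveRoot_pow_div_gcd {G : Type*} [CommMonoid G] {ζ : G} {k : ℕ} [NeZero k]
    (hζ : IsPrimitiveRoot ζ k) (n : ℕ) : IsPrimitiveRoot (ζ ^ n) (k / n.gcd k) := by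
  have hfin : IsOfFinOrder ζ := isOfFinOrder_iff_pow_eq_one.2 ⟨k, NeZero.pos k, hζ.pow_eq_one⟩
  rw [IsPrimitiveRoot.iff_orderOf, hfin.orderOf_pow, ← hζ.eq_orderOf, Nat.gcd_comm]

section IsDomain

variable {R : Type*} [CommRing R] [IsDomain R] {ζ : R} {k : ℕ}

theorem sum_primitiveRoots_eq_sum_units {A : Type*} [AddCommMonoid A] [NeZero k]
    (hζ : IsPrimitiveRoot ζ k) (F : R → A) :
    ∑ z ∈ primitiveRoots k R, F z = ∑ u : (ZMod k)ˣ, F (ζ ^ (u : ZMod k).val) := by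
  symm
  refine sum_bij (fun u _ ↦ ζ ^ (u : ZMod k).val) (fun u _ ↦ ?mem) (fun u _ v _ huv ↦ ?inj)
    (fun z hz ↦ ?surj) fun _ _ ↦ rfl
  case mem =>
    exact (mem_primitiveRoots (NeZero.pos k)).2
      (hζ.pow_of_coprime _ (ZMod.val_coe_unit_coprime u))
  case inj =>
    exact Units.ext (ZMod.val_injective k (hζ.pow_inj (ZMod.val_lt _) (ZMod.val_lt _) huv))
  case surj =>
    obtain ⟨i, hik, hcop, rfl⟩ :=
      hζ.isPrimitiveRoot_iff.1 (isPrimitiveRoot_of_mem_primitiveRoots hz)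
    refine ⟨ZMod.unitOfCoprime i hcop, mem_univ _, ?_⟩
    rw [ZMod.coe_unitOfCoprime, ZMod.val_cast_of_lt hik]

theorem sum_primitiveRoots_comp_pow {A : Type*} [AddCommMonoid A] [NeZero k]
    (hζ : IsPrimitiveRoot ζ k) (n : ℕ) (F : R → A) :
    ∑ z ∈ primitiveRoots k R, F (z ^ n) =
      (k.totient / (k / n.gcd k).totient) • ∑ w ∈ primitiveRoots (k / n.gcd k) R, F w := by
  have hζn : IsPrimitiveRoot (ζ ^ n) (k / n.gcd k) := isPrimitiveRoot_pow_div_gcd hζ n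
  have hdvd : k / n.gcd k ∣ k := Nat.div_dvd_of_dvd (n.gcd_dvd_right k)
  generalize k / n.gcd k = e at hζn hdvd
  have : NeZero e := ⟨ne_zero_of_dvd_ne_zero (NeZero.ne k) hdvd⟩
  have pow_unit (u : (ZMod k)ˣ) :
      (ζ ^ (u : ZMod k).val) ^ n = (ζ ^ n) ^ (ZMod.unitsMap hdvd u : ZMod e).val := by
    rw [pow_right_comm, ZMod.unitsMap_val, ZMod.cast_eq_val, ZMod.val_natCast,
      pow_eq_pow_mod _ hζn.pow_eq_one]
  simp_rw [sum_primitiveRoots_eq_sum_units hζ, sum_primitiveRoots_eq_sum_units hζn, pow_unit]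
  rw [sum_comp_monoidHom_of_surjective (ZMod.unitsMap_surjective hdvd)
    fun v ↦ F ((ζ ^ n) ^ (v : ZMod e).val), ZMod.card_units_eq_totient, ZMod.card_units_eq_totient]

theorem sum_nthRootsFinset_one (hζ : IsPrimitiveRoot ζ k) :
    ∑ z ∈ nthRootsFinset k (1 : R), z = if k = 1 then 1 else 0 := by
  classical
  have sum_eq_geom_sum : ∑ z ∈ nthRootsFinset k (1 : R), z = ∑ i ∈ range k, ζ ^ i := by
    rw [nthRootsFinset, ← Multiset.toFinset_eq hζ.nthRoots_one_nodup, sum_mk,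
      hζ.nthRoots_eq (one_pow k), Multiset.map_map]
    simp [Finset.sum]
  rw [sum_eq_geom_sum]
  split_ifs with hk
  · simp [hk]
  · rcases k.eq_zero_or_pos with rfl | hpos
    · simp
    · exact hζ.geom_sum_eq_zero (by lia)

theorem sum_primitiveRoots_eq_moebius (hζ : IsPrimitiveRoot ζ k) :
    ∑ z ∈ primitiveRoots k R, z = (ArithmeticFunction.moebius k : R) := by
  classical
  rcases k.eq_zero_or_pos with rfl | hk
  · simp
  have sum_divisors (m : ℕ) (_ : 0 < m) (hmk : m ∣ k) :
      ∑ i ∈ m.divisors, ∑ z ∈ primitiveRoots i R, z = if m = 1 then 1 else 0 := by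
    rw [← sum_biUnion fun i _ j _ hij ↦ IsPrimitiveRoot.disjoint hij,
      ← IsPrimitiveRoot.nthRoots_one_eq_biUnion_primitiveRoots]
    exact sum_nthRootsFinset_one (hζ.pow hk (Nat.div_mul_cancel hmk).symm)
  rw [← (ArithmeticFunction.sum_eq_iff_sum_mul_moebius_eq_on {m | m ∣ k}
    fun _ _ ↦ dvd_trans).1 sum_divisors k hk dvd_rfl,
    Nat.sum_divisorsAntidiagonal'
    fun a b ↦ (ArithmeticFunction.moebius a : R) * if b = 1 then 1 else 0]
  simp [hk.ne']

theorem sum_primitive_roots_pow_eq_totient_ratio_mul_moebius_general [NeZero k]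
    (hζ : IsPrimitiveRoot ζ k) (n : ℕ) :
    (∑ z ∈ primitiveRoots k R, z ^ n) =
      ((k.totient / (k / n.gcd k).totient : ℕ) : R) *
        ((ArithmeticFunction.moebius (k / n.gcd k) : ℤ) : R) ∧
    (k ∣ n → (∑ z ∈ primitiveRoots k R, z ^ n) = (k.totient : R)) ∧
    (n.gcd k = 1 →
      (∑ z ∈ primitiveRoots k R, z ^ n) = ((ArithmeticFunction.moebius k : ℤ) : R)) := by
  have sum_pow : ∑ z ∈ primitiveRoots k R, z ^ n =
      ((k.totient / (k / n.gcd k).totient : ℕ) : R) *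
        (ArithmeticFunction.moebius (k / n.gcd k) : R) := by
    rw [sum_primitiveRoots_comp_pow hζ n fun w ↦ w,
      sum_primitiveRoots_eq_moebius (isPrimitiveRoot_pow_div_gcd hζ n), nsmul_eq_mul]
  refine ⟨sum_pow, fun hdvd ↦ ?_, fun hcop ↦ ?_⟩
  · rw [sum_pow, Nat.gcd_eq_right hdvd, Nat.div_self (NeZero.pos k)]
    simp
  · rw [sum_pow, hcop, Nat.div_one, Nat.div_self (Nat.totient_pos.2 (NeZero.pos k))]
    simp

end IsDomain

/-- **Proposition 22 (gcd rule for cyclotomic Lucas sequences).**  For `M ≥ 1` and `n ∈ ℕ`,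
with `d = gcd(n, M)`, the sum of `z^n` over all primitive `M`-th roots of unity `z` in `ℂ`
equals `(φ(M)/φ(M/d))·μ(M/d)`.  In particular if `M ∣ n` the sum is `φ(M)`, and if
`gcd(n, M) = 1` the sum is `μ(M)`. -/
theorem sum_primitive_roots_pow_eq_totient_ratio_mul_moebius
    (M n : ℕ) (hM : 1 ≤ M) :
    (∑ z ∈ primitiveRoots M ℂ, z ^ n) =
      ((M.totient / (M / Nat.gcd n M).totient : ℕ) : ℂ) *
        ((ArithmeticFunction.moebius (M / Nat.gcd n M) : ℤ) : ℂ) ∧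
    (M ∣ n → (∑ z ∈ primitiveRoots M ℂ, z ^ n) = (M.totient : ℂ)) ∧
    (Nat.gcd n M = 1 →
      (∑ z ∈ primitiveRoots M ℂ, z ^ n) = ((ArithmeticFunction.moebius M : ℤ) : ℂ)) := by
  have : NeZero M := .of_pos hM
  exact sum_primitive_roots_pow_eq_totient_ratio_mul_moebius_general
    (Complex.isPrimitiveRoot_exp M (NeZero.ne M)) n
end

section
/- With the number-field setup below, let Λ be a conjugacy class of G := Gal(E/K) with λ := card(Λ), fix k with 0 ≤ k ≤ d−1, and define Ω_{Λ;k}(R) := ∏_{s∈Λ} (R − Ψ_k(s)) ∈ E[R], where Ψ_k(s) is the coefficient of X^k in Ψ_s. Then: (1) Ω_{Λ;k} is monic of degree λ, all its coefficients lie in K, and Δ_C^λ · Ω_{Λ;k} has all its coefficients in A; (2) as an element of K[R], Ω_{Λ;k} is either irreducible or a power of an irreducible polynomial. -/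
open Polynomial NumberField

/-!
An automorphism `τ` permutes the roots `xᵢ` of `C`, so by uniqueness of interpolation it sends
`Ψ_σ` to `Ψ_{τστ⁻¹}`, and hence `Ψ_k(σ)` to `Ψ_k(τστ⁻¹)`. The elements `Ψ_k(s)`, `s ∈ Λ`, therefore
form one Galois orbit, possibly with repetitions: their product polynomial `Ω` is fixed by Galois,
and it is a power of the minimal polynomial over `K` shared by all its roots.
The denominators `∏_{j≠i} (xᵢ - xⱼ)` in Lagrange's formula divide the discriminant, so `Δ Ψ_k(s)`
is integral; thus `Δ^λ Ω` has integral coefficients in `K`, and `A` is integrally closed.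
-/

section Discriminant

variable {ι : Type*} [Fintype ι] [LinearOrder ι]

theorem prod_filter_lt_mul_eq_prod_prod_erase {M : Type*} [CommMonoid M] (f : ι → ι → M) :
    ∏ q ∈ Finset.univ.filter (fun q : ι × ι => q.1 < q.2), f q.1 q.2 * f q.2 q.1 =
      ∏ i, ∏ j ∈ Finset.univ.erase i, f i j := by
  let := LocallyFiniteOrderTop.ofIci' ι (fun a => Finset.univ.filter (a ≤ ·)) (by simp)
  let := LocallyFiniteOrderBot.ofIic' ι (fun a => Finset.univ.filter (· ≤ a)) (by simp)
  rw [Finset.prod_finset_product _ Finset.univ Finset.Ioi (by simp)]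
  simp only [← Finset.compl_singleton]
  rw [← Finset.prod_prod_Ioi_mul_eq_prod_prod_off_diag fun j i => f i j]

theorem prod_erase_sub_dvd_prod_filter_lt_sub_sq {R : Type*} [CommRing R] (x : ι → R) (i : ι) :
    ∏ j ∈ Finset.univ.erase i, (x i - x j) ∣
      ∏ q ∈ Finset.univ.filter (fun q : ι × ι => q.1 < q.2), (x q.1 - x q.2) ^ 2 := by
  have dvd_ordered : ∏ j ∈ Finset.univ.erase i, (x i - x j) ∣
      ∏ q ∈ Finset.univ.filter (fun q : ι × ι => q.1 < q.2),
        (x q.1 - x q.2) * (x q.2 - x q.1) := by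
    rw [prod_filter_lt_mul_eq_prod_prod_erase fun a b => x a - x b]
    exact Finset.dvd_prod_of_mem (fun a => ∏ j ∈ Finset.univ.erase a, (x a - x j))
      (Finset.mem_univ i)
  exact dvd_ordered.trans (Finset.prod_dvd_prod_of_dvd _ _ fun q _ => ⟨-1, by ring⟩)

end Discriminant

theorem C_mul_interpolate_mem_lifts {R F ι : Type*} [CommRing R] [Field F] [DecidableEq ι]
    (f : R →+* F) {s : Finset ι} {x : ι → R} (hx : Set.InjOn (f ∘ x) s) {D : R}
    (hD : ∀ i ∈ s, ∏ j ∈ s.erase i, (x i - x j) ∣ D) (r : ι → R) :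
    C (f D) * Lagrange.interpolate s (f ∘ x) (f ∘ r) ∈ lifts f := by
  rw [Lagrange.interpolate_apply, Finset.mul_sum]
  refine sum_mem fun i hi => ?_
  obtain ⟨c, rfl⟩ := hD i hi
  have denominator_ne_zero : ∏ j ∈ s.erase i, (f (x i) - f (x j)) ≠ 0 :=
    Finset.prod_ne_zero_iff.mpr fun j hj => sub_ne_zero.mpr fun h =>
      Finset.ne_of_mem_erase hj (hx (Finset.mem_of_mem_erase hj) hi h.symm)
  have denominator_cancels :
      f ((∏ j ∈ s.erase i, (x i - x j)) * c) * (∏ j ∈ s.erase i, (f (x i) - f (x j)))⁻¹ = f c := by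
    simp only [map_mul, map_prod, map_sub]
    field_simp
  have term_eq : C (f ((∏ j ∈ s.erase i, (x i - x j)) * c)) *
      (C ((f ∘ r) i) * Lagrange.basis s (f ∘ x) i) =
        C (f (c * r i)) * ∏ j ∈ s.erase i, (X - C (f (x j))) := by
    rw [map_mul f c, ← denominator_cancels]
    simp only [Lagrange.basis, Lagrange.basisDivisor, Finset.prod_mul_distrib, C_mul,
      Finset.prod_inv_distrib, Function.comp_apply, ← map_prod C]
    ring
  rw [term_eq, mem_lifts]
  exact ⟨C (c * r i) * ∏ j ∈ s.erase i, (X - C (x j)), by simp [Polynomial.map_prod]⟩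

theorem C_pow_card_mul_prod_X_sub_C_mem_lifts {R S ι : Type*} [CommRing R] [CommRing S]
    (f : R →+* S) {s : Finset ι} {a : ι → S} {D : S} (hD : D ∈ f.range)
    (ha : ∀ i ∈ s, D * a i ∈ f.range) :
    C (D ^ s.card) * ∏ i ∈ s, (X - C (a i)) ∈ lifts f := by
  obtain ⟨D, rfl⟩ := hD
  rw [C_pow, ← Finset.prod_const, ← Finset.prod_mul_distrib]
  refine prod_mem fun i hi => ?_
  obtain ⟨b, hb⟩ := ha i hi
  refine (mem_lifts _).mpr ⟨C D * X - C b, ?_⟩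
  simp only [Polynomial.map_sub, Polynomial.map_mul, map_C, map_X, hb, C_mul]
  ring

theorem mem_lifts_of_forall_algEquiv_map_eq {K E : Type*} [Field K] [Field E] [Algebra K E]
    [IsGalois K E] {p : E[X]} (hp : ∀ τ : Gal(E/K), p.map (τ : E →+* E) = p) :
    p ∈ lifts (algebraMap K E) := by
  refine (lifts_iff_coeff_lifts p).mpr fun m =>
    (InfiniteGalois.mem_range_algebraMap_iff_fixed _).mpr fun τ => ?_
  calc τ (p.coeff m) = (p.map (τ : E →+* E)).coeff m := (coeff_map (τ : E →+* E) m).symm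
    _ = p.coeff m := by rw [hp]

theorem mem_lifts_of_isIntegral {A B K E : Type*} [CommRing A] [IsIntegrallyClosed A] [Field K]
    [Algebra A K] [IsFractionRing A K] [Field E] [Algebra K E] [CommRing B] [Algebra A B]
    [Algebra.IsIntegral A B] [Algebra B E] [Algebra A E] [IsScalarTower A K E]
    [IsScalarTower A B E] {p : E[X]} (hpK : p ∈ lifts (algebraMap K E))
    (hpB : p ∈ lifts (algebraMap B E)) : p ∈ lifts (algebraMap A E) := by
  rw [lifts_iff_coeff_lifts] at hpK hpB ⊢
  intro m
  obtain ⟨b, hb⟩ := hpB m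
  obtain ⟨r, hr⟩ := hpK m
  have r_integral : IsIntegral A r := by
    rw [← isIntegral_algebraMap_iff (algebraMap K E).injective, hr, ← hb]
    exact (Algebra.IsIntegral.isIntegral b).algebraMap
  obtain ⟨a, rfl⟩ := IsIntegrallyClosed.isIntegral_iff.mp r_integral
  exact ⟨a, (IsScalarTower.algebraMap_apply A K E a).trans hr⟩

theorem C_pow_card_mul_prod_X_sub_C_mem_lifts_of_isIntegral {A K E ι : Type*} (B : Type*)
    [CommRing A] [IsIntegrallyClosed A] [Field K] [Algebra A K] [IsFractionRing A K] [Field E]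
    [Algebra K E] [CommRing B] [Algebra A B] [Algebra.IsIntegral A B] [Algebra B E] [Algebra A E]
    [IsScalarTower A K E] [IsScalarTower A B E] {s : Finset ι} {a : ι → E} {D : A}
    (hK : ∏ i ∈ s, (X - C (a i)) ∈ lifts (algebraMap K E))
    (hB : ∀ i ∈ s, algebraMap A E D * a i ∈ (algebraMap B E).range) :
    C (algebraMap A E D ^ s.card) * ∏ i ∈ s, (X - C (a i)) ∈ lifts (algebraMap A E) := by
  apply mem_lifts_of_isIntegral (K := K) (B := B)
  · rw [IsScalarTower.algebraMap_apply A K E, ← map_pow]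
    exact base_mul_mem_lifts _ hK
  · refine C_pow_card_mul_prod_X_sub_C_mem_lifts _ ⟨algebraMap A B D, ?_⟩ hB
    exact (IsScalarTower.algebraMap_apply A B E D).symm

section RootPermutation

theorem exists_perm_algEquiv_apply_eq {R S ι : Type*} [CommRing R] [CommRing S] [IsDomain S]
    [Algebra R S] [Fintype ι] {p : R[X]} {y : ι → S} (hy : Function.Injective y)
    (hp : p.map (algebraMap R S) = ∏ i, (X - C (y i))) (τ : S ≃ₐ[R] S) :
    ∃ π : Equiv.Perm ι, ∀ i, τ (y i) = y (π i) := by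
  have isRoot_iff (z : S) : aeval z p = 0 ↔ ∃ i, z = y i := by
    simp [← eval_map_algebraMap, hp, eval_prod, Finset.prod_eq_zero_iff, sub_eq_zero]
  have permutes (i : ι) : ∃ j, τ (y i) = y j := by
    rw [← isRoot_iff, aeval_algHom_apply, (isRoot_iff _).mpr ⟨i, rfl⟩, map_zero]
  choose π hπ using permutes
  have π_injective : Function.Injective π := fun i j hij =>
    hy (τ.injective (by rw [hπ, hπ, hij]))
  exact ⟨Equiv.ofBijective π (Finite.injective_iff_bijective.mp π_injective), hπ⟩

variable {K E ι : Type*} [Field K] [Field E] [Algebra K E] [Fintype ι] [DecidableEq ι]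

/-- The root-permuting polynomial `Ψ_σ`: the interpolant of degree less than `card ι` taking the
value `σ (y i)` at each node `y i`. -/
noncomputable def galoisInterpolant (y : ι → E) (σ : Gal(E/K)) : E[X] :=
  Lagrange.interpolate Finset.univ y fun i => σ (y i)

theorem eq_galoisInterpolant {y : ι → E} (hy : Function.Injective y) {σ : Gal(E/K)} {P : E[X]}
    (hdeg : P.degree < Fintype.card ι) (heval : ∀ i, P.eval (y i) = σ (y i)) :
    P = galoisInterpolant y σ :=
  Lagrange.eq_interpolate_of_eval_eq _ hy.injOn hdeg fun i _ => heval i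

theorem map_galoisInterpolant {y : ι → E} (hy : Function.Injective y) {τ : Gal(E/K)}
    {π : Equiv.Perm ι} (hπ : ∀ i, τ (y i) = y (π i)) (σ : Gal(E/K)) :
    (galoisInterpolant y σ).map (τ : E →+* E) = galoisInterpolant y (τ * σ * τ⁻¹) := by
  refine eq_galoisInterpolant hy
    (degree_map_le.trans_lt (Lagrange.degree_interpolate_lt _ hy.injOn)) fun j => ?_
  obtain ⟨i, rfl⟩ := π.surjective j
  calc ((galoisInterpolant y σ).map (τ : E →+* E)).eval (y (π i))
      = τ ((galoisInterpolant y σ).eval (y i)) := by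
        rw [← hπ]; exact eval_map_apply (f := (τ : E →+* E)) (y i)
    _ = τ (σ (y i)) :=
        congrArg τ (Lagrange.eval_interpolate_at_node _ hy.injOn (Finset.mem_univ i))
    _ = (τ * σ * τ⁻¹) (y (π i)) := by simp [← hπ, AlgEquiv.mul_apply]

theorem algEquiv_coeff_galoisInterpolant {y : ι → E} (hy : Function.Injective y)
    {τ : Gal(E/K)} {π : Equiv.Perm ι} (hπ : ∀ i, τ (y i) = y (π i)) (σ : Gal(E/K)) (k : ℕ) :
    τ ((galoisInterpolant y σ).coeff k) = (galoisInterpolant y (τ * σ * τ⁻¹)).coeff k := by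
  rw [← map_galoisInterpolant hy hπ]
  exact (coeff_map (τ : E →+* E) k).symm

theorem algebraMap_mul_coeff_galoisInterpolant_mem_range {B : Type*} [CommRing B] [Algebra B E]
    {x r : ι → B} (hx : Function.Injective fun i => algebraMap B E (x i)) {σ : Gal(E/K)}
    (hr : ∀ i, σ (algebraMap B E (x i)) = algebraMap B E (r i)) {D : B}
    (hD : ∀ i, ∏ j ∈ Finset.univ.erase i, (x i - x j) ∣ D) (k : ℕ) :
    algebraMap B E D * (galoisInterpolant (fun i => algebraMap B E (x i)) σ).coeff k ∈
      (algebraMap B E).range := by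
  rw [← coeff_C_mul]
  refine (lifts_iff_coeff_lifts _).mp ?_ k
  simp only [galoisInterpolant, hr]
  exact C_mul_interpolate_mem_lifts (algebraMap B E) hx.injOn (fun i _ => hD i) r

end RootPermutation

theorem exists_eq_pow_of_forall_minpoly_eq {K E : Type*} [Field K] [Field E] [Algebra K E]
    {P g : K[X]} (hP : P.Monic) (hsplits : (P.map (algebraMap K E)).Splits) (hg : g.Monic)
    (hroots : ∀ r : E, aeval r P = 0 → minpoly K r = g) : ∃ m : ℕ, P = g ^ m := by
  classical
  have factor_eq {p : K[X]} (hp : p ∈ UniqueFactorizationMonoid.normalizedFactors P) : p = g := by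
    have p_irreducible := UniqueFactorizationMonoid.irreducible_of_normalized_factor p hp
    have p_dvd := UniqueFactorizationMonoid.dvd_of_mem_normalizedFactors hp
    have p_monic : p.Monic := by
      rw [← UniqueFactorizationMonoid.normalize_normalized_factor p hp]
      exact monic_normalize p_irreducible.ne_zero
    obtain ⟨r, hr⟩ : ∃ r : E, aeval r p = 0 := by
      simpa only [eval_map_algebraMap] using
        (hsplits.of_dvd (hP.map _).ne_zero (Polynomial.map_dvd _ p_dvd)).exists_eval_eq_zero
          (by rw [degree_map]; exact p_irreducible.degree_pos.ne')
    rw [← hroots r (aeval_eq_zero_of_dvd_aeval_eq_zero p_dvd hr)]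
    exact minpoly.eq_of_irreducible_of_monic p_irreducible hr p_monic
  obtain ⟨m, hm⟩ :=
    UniqueFactorizationMonoid.exists_associated_prime_pow_of_unique_normalized_factor
      factor_eq hP.ne_zero
  exact ⟨m, (eq_of_monic_of_associated (hg.pow m) hP hm).symm⟩

section ConjugacyClass

variable {K E : Type*} [Field K] [Field E] [Algebra K E] {Λ : Finset Gal(E/K)} {a : Gal(E/K) → E}

theorem map_prod_X_sub_C_eq_self_of_conj (hΛ : ∀ s t, IsConj s t → s ∈ Λ → t ∈ Λ)
    (ha : ∀ τ s, τ (a s) = a (τ * s * τ⁻¹)) (τ : Gal(E/K)) :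
    (∏ s ∈ Λ, (X - C (a s))).map (τ : E →+* E) = ∏ s ∈ Λ, (X - C (a s)) := by
  rw [Polynomial.map_prod]
  refine Finset.prod_equiv (MulAut.conj τ).toEquiv (fun s => ?_) fun s _ => ?_
  · have conj_s : IsConj s (MulAut.conj τ s) := isConj_iff.mpr ⟨τ, rfl⟩
    exact ⟨hΛ _ _ conj_s, hΛ _ _ conj_s.symm⟩
  · simp only [Polynomial.map_sub, map_X, map_C]
    exact congrArg (fun z => X - C z) (ha τ s)

theorem prod_X_sub_C_mem_lifts_of_conj [IsGalois K E] (hΛ : ∀ s t, IsConj s t → s ∈ Λ → t ∈ Λ)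
    (ha : ∀ τ s, τ (a s) = a (τ * s * τ⁻¹)) :
    ∏ s ∈ Λ, (X - C (a s)) ∈ lifts (algebraMap K E) :=
  mem_lifts_of_forall_algEquiv_map_eq (map_prod_X_sub_C_eq_self_of_conj hΛ ha)

theorem exists_eq_minpoly_pow_of_map_eq_prod_X_sub_C {σ₀ : Gal(E/K)}
    (hint : IsIntegral K (a σ₀)) (hΛ : ∀ s ∈ Λ, IsConj σ₀ s)
    (ha : ∀ τ s, τ (a s) = a (τ * s * τ⁻¹)) {P : K[X]}
    (hP : P.map (algebraMap K E) = ∏ s ∈ Λ, (X - C (a s))) :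
    ∃ m : ℕ, P = minpoly K (a σ₀) ^ m := by
  have P_monic : P.Monic :=
    monic_of_injective (algebraMap K E).injective (hP ▸ monic_prod_X_sub_C _ _)
  have P_splits : (P.map (algebraMap K E)).Splits :=
    hP ▸ Splits.prod fun s _ => Splits.X_sub_C _
  refine exists_eq_pow_of_forall_minpoly_eq P_monic P_splits (minpoly.monic hint) fun r hr => ?_
  obtain ⟨s, hs, rfl⟩ : ∃ s ∈ Λ, r = a s := by
    simpa [← eval_map_algebraMap, hP, eval_prod, Finset.prod_eq_zero_iff, sub_eq_zero] using hr
  obtain ⟨τ, rfl⟩ := isConj_iff.mp (hΛ s hs)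
  rw [← ha, minpoly.algEquiv_eq]

end ConjugacyClass

theorem conjugacy_class_polynomial_integrality_and_irreducibility_general
    {A B K E : Type*} [CommRing A] [IsIntegrallyClosed A] [Field K] [Algebra A K]
    [IsFractionRing A K] [Field E] [Algebra K E] [IsGalois K E] [CommRing B] [Algebra A B]
    [Algebra.IsIntegral A B] [Algebra B E] [FaithfulSMul B E] [Algebra A E]
    [IsScalarTower A K E] [IsScalarTower A B E]
    (d : ℕ) (F : A[X]) (x : Fin d → B) (hxinj : Function.Injective x)
    (hsplit : F.map (algebraMap A B) = ∏ i, (X - C (x i)))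
    (Δ : A)
    (hΔ : algebraMap A B Δ =
      ∏ q ∈ Finset.univ.filter (fun q : Fin d × Fin d => q.1 < q.2), (x q.1 - x q.2) ^ 2)
    (Ψ : Gal(E/K) → E[X]) (hΨdeg : ∀ σ, (Ψ σ).degree < d)
    (hΨeval : ∀ σ i, (Ψ σ).eval (algebraMap B E (x i)) = σ (algebraMap B E (x i)))
    (σ₀ : Gal(E/K)) (Λ : Finset Gal(E/K)) (hΛ : ∀ τ, τ ∈ Λ ↔ IsConj σ₀ τ) (k : ℕ)
    (Ω : E[X]) (hΩ : Ω = ∏ s ∈ Λ, (X - C ((Ψ s).coeff k))) :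
    (Ω.Monic ∧ Ω.natDegree = Λ.card ∧ (∀ m, Ω.coeff m ∈ (algebraMap K E).range) ∧
      ∀ m, ∃ a : A, algebraMap A E a = algebraMap A E Δ ^ Λ.card * Ω.coeff m) ∧
    ∀ ΩK : K[X], ΩK.map (algebraMap K E) = Ω →
      Irreducible ΩK ∨ ∃ (g : K[X]) (m : ℕ), Irreducible g ∧ ΩK = g ^ m := by
  subst hΩ
  let y : Fin d → E := fun i => algebraMap B E (x i)
  have y_injective : Function.Injective y := (FaithfulSMul.algebraMap_injective B E).comp hxinj
  have map_eq_prod : F.map (algebraMap A E) = ∏ i, (X - C (y i)) := by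
    rw [IsScalarTower.algebraMap_eq A B E, ← map_map, hsplit]
    simp [Polynomial.map_prod, y]
  choose π hπ using fun τ : Gal(E/K) =>
    exists_perm_algEquiv_apply_eq y_injective map_eq_prod (τ.restrictScalars A)
  obtain rfl : Ψ = galoisInterpolant y :=
    funext fun σ => eq_galoisInterpolant y_injective (by simpa using hΨdeg σ) (hΨeval σ)
  have equivariant (τ s : Gal(E/K)) :=
    algEquiv_coeff_galoisInterpolant y_injective (hπ τ) s k
  have Ω_mem_lifts := prod_X_sub_C_mem_lifts_of_conj
    (fun s t hst hs => (hΛ t).mpr (((hΛ s).mp hs).trans hst)) equivariant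
  have ΔΨ_mem (s : Gal(E/K)) :
      algebraMap A E Δ * (galoisInterpolant y s).coeff k ∈ (algebraMap B E).range := by
    rw [IsScalarTower.algebraMap_apply A B E]
    exact algebraMap_mul_coeff_galoisInterpolant_mem_range y_injective (hπ s)
      (hΔ ▸ prod_erase_sub_dvd_prod_filter_lt_sub_sq x) k
  refine ⟨⟨monic_prod_X_sub_C _ _, by simp, (lifts_iff_coeff_lifts _).mp Ω_mem_lifts,
    fun m => ?_⟩, fun ΩK hΩK => Or.inr ?_⟩
  · rw [← coeff_C_mul]
    exact (lifts_iff_coeff_lifts _).mp (C_pow_card_mul_prod_X_sub_C_mem_lifts_of_isIntegral B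
      Ω_mem_lifts fun s _ => ΔΨ_mem s) m
  · have isIntegral_coeff : IsIntegral K ((galoisInterpolant y σ₀).coeff k) :=
      Algebra.IsIntegral.isIntegral _
    obtain ⟨m, hm⟩ := exists_eq_minpoly_pow_of_map_eq_prod_X_sub_C isIntegral_coeff
      (fun s => (hΛ s).mp) equivariant hΩK
    exact ⟨_, m, minpoly.irreducible isIntegral_coeff, hm⟩

/-- **Theorem 24, points 1 & 2 (conjugacy class polynomials).**  Set-up: `E/K` Galois
extension of number fields, `C ∈ 𝓞 K [X]` monic of degree `d ≥ 2` with distinct roots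
`x₁,…,x_d ∈ 𝓞 E` generating `E/K`, `Δ = ∏_{i<j}(xᵢ-xⱼ)² ∈ 𝓞 K`; for `s ∈ Gal(E/K)`,
`Ψ_s ∈ E[X]` is the root-permuting polynomial, `Ψ_k(s)` its coefficient of `X^k`.
Let `Λ` be a conjugacy class of `Gal(E/K)`, `λ = card Λ`, and for `0 ≤ k ≤ d-1` put
`Ω_{Λ;k}(R) = ∏_{s∈Λ} (R - Ψ_k(s))`.  Then:
(1) `Ω_{Λ;k}` is monic of degree `λ`, with all coefficients in `K`, and `Δ^λ·Ω_{Λ;k}` has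
all coefficients in `𝓞 K`;
(2) viewed in `K[R]`, `Ω_{Λ;k}` is irreducible or a power of an irreducible polynomial. -/
theorem conjugacy_class_polynomial_integrality_and_irreducibility
    {K E : Type*} [Field K] [NumberField K] [Field E] [NumberField E]
    [Algebra K E] [IsGalois K E]
    (d : ℕ) (hd : 2 ≤ d)
    (C : Polynomial (𝓞 K)) (hC : C.Monic) (hdeg : C.natDegree = d)
    (x : Fin d → 𝓞 E) (hxinj : Function.Injective x)
    (hsplit : C.map (algebraMap (𝓞 K) (𝓞 E)) = ∏ i, (X - Polynomial.C (x i)))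
    (hgen : IntermediateField.adjoin K
      (Set.range fun i => (algebraMap (𝓞 E) E (x i))) = ⊤)
    (Δ : 𝓞 K)
    (hΔ : algebraMap (𝓞 K) (𝓞 E) Δ =
      ∏ q ∈ Finset.univ.filter (fun q : Fin d × Fin d => q.1 < q.2), (x q.1 - x q.2) ^ 2)
    (Ψ : (E ≃ₐ[K] E) → Polynomial E)
    (hΨdeg : ∀ σ : E ≃ₐ[K] E, (Ψ σ).degree < d)
    (hΨeval : ∀ (σ : E ≃ₐ[K] E) (i : Fin d),
      (Ψ σ).eval (algebraMap (𝓞 E) E (x i)) = σ (algebraMap (𝓞 E) E (x i)))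
    (σ₀ : E ≃ₐ[K] E) (Λ : Finset (E ≃ₐ[K] E))
    (hΛ : ∀ τ : E ≃ₐ[K] E, τ ∈ Λ ↔ IsConj σ₀ τ)
    (k : ℕ) (hk : k < d) :
    ((∏ s ∈ Λ, (X - Polynomial.C ((Ψ s).coeff k))).Monic ∧
      (∏ s ∈ Λ, (X - Polynomial.C ((Ψ s).coeff k))).natDegree = Λ.card ∧
      (∀ m : ℕ, (∏ s ∈ Λ, (X - Polynomial.C ((Ψ s).coeff k))).coeff m ∈
        (algebraMap K E).range) ∧
      (∀ m : ℕ, ∃ a : 𝓞 K, algebraMap (𝓞 K) E a =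
        (algebraMap (𝓞 K) E Δ) ^ Λ.card *
          (∏ s ∈ Λ, (X - Polynomial.C ((Ψ s).coeff k))).coeff m)) ∧
    (∀ ΩK : Polynomial K,
      ΩK.map (algebraMap K E) = ∏ s ∈ Λ, (X - Polynomial.C ((Ψ s).coeff k)) →
      Irreducible ΩK ∨ ∃ (g : Polynomial K) (m : ℕ), Irreducible g ∧ ΩK = g ^ m) :=
  conjugacy_class_polynomial_integrality_and_irreducibility_general d C x hxinj hsplit Δ hΔ Ψ
    hΨdeg hΨeval σ₀ Λ hΛ k _ rfl
end

section
/- Let K be a number field with ring of integers A, let u, v ∈ A, set Δ := −4u³ − 27v², and let P be a prime ideal of A with Δ ∉ P. For (a, b, c) ∈ A³ consider the three systems of congruences: S₁: a ∈ P, b − 1 ∈ P, c ∈ P; S₃: Δa² − 9u² ∈ P, Δ(b² + b) − (u³ + 27v²) ∈ P, Δc² − 4u⁴ ∈ P; S₂: Δa³ − 9u²a − 27v ∈ P, Δb³ + 3u³b − u³ ∈ P, Δc³ − 4u⁴c − 8u³v ∈ P. Then for every (a, b, c) ∈ A³ and every pair of distinct indices f ≠ f' in {1, 2, 3}, the systems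 S_f and S_{f'} cannot hold simultaneously. -/
open NumberField

/-!
Reduce modulo `P`, so that the congruences become equations in a commutative ring. Any two of the
systems then force `Δ ^ 2 = 0`, which is excluded when `P` is prime and `Δ ∉ P`. For `S₁` one
substitutes `(a, b, c) = (0, 1, 0)` into the other system. For `S₃` and `S₂`, comparing the
equations for `a` gives `27 * v = 0`, whence `Δ = -4 * u ^ 3`; the equations for `b` then say that
`Δ` kills both `(2 * b + 1) ^ 2` and `4 * b ^ 3 - 3 * b + 1`, and these generate an ideal
containing `4`, so `Δ ^ 2 = -u ^ 3 * (4 * Δ) = 0`.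
-/

section

variable {R : Type*} [CommRing R] {u v Δ a b c : R}

theorem disc_sq_eq_zero_of_systems_one_three (hΔ : Δ = -4 * u ^ 3 - 27 * v ^ 2)
    (ha₁ : a = 0) (hb₁ : b - 1 = 0) (hc₁ : c = 0)
    (ha₃ : Δ * a ^ 2 - 9 * u ^ 2 = 0)
    (hb₃ : Δ * (b ^ 2 + b) - (u ^ 3 + 27 * v ^ 2) = 0)
    (hc₃ : Δ * c ^ 2 - 4 * u ^ 4 = 0) :
    Δ ^ 2 = 0 := by
  obtain rfl : b = 1 := sub_eq_zero.mp hb₁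
  subst ha₁ hc₁
  have nine_mul_u_sq : 9 * u ^ 2 = 0 := by linear_combination -ha₃
  have u_pow_four : u ^ 4 = 0 := by linear_combination u ^ 2 * nine_mul_u_sq + 2 * hc₃
  have nine_mul_disc : 9 * Δ = 0 := by linear_combination 3 * hb₃ + 3 * hΔ - u * nine_mul_u_sq
  have u_cube_mul_disc : u ^ 3 * Δ = 0 := by
    linear_combination u ^ 3 * hΔ - 4 * u ^ 2 * u_pow_four - 3 * u * v ^ 2 * nine_mul_u_sq
  calc
    Δ ^ 2 = -4 * (u ^ 3 * Δ) - 3 * v ^ 2 * (9 * Δ) := by linear_combination Δ * hΔ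
    _ = 0 := by rw [u_cube_mul_disc, nine_mul_disc]; ring

theorem disc_eq_zero_of_systems_one_two (hΔ : Δ = -4 * u ^ 3 - 27 * v ^ 2)
    (ha₁ : a = 0) (hb₁ : b - 1 = 0)
    (ha₂ : Δ * a ^ 3 - 9 * u ^ 2 * a - 27 * v = 0)
    (hb₂ : Δ * b ^ 3 + 3 * u ^ 3 * b - u ^ 3 = 0) :
    Δ = 0 := by
  obtain rfl : b = 1 := sub_eq_zero.mp hb₁
  subst ha₁
  have twentySeven_mul_v : 27 * v = 0 := by linear_combination -ha₂
  have disc_add_two_mul_u_cube : Δ + 2 * u ^ 3 = 0 := by linear_combination hb₂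
  linear_combination 2 * disc_add_two_mul_u_cube - hΔ + v * twentySeven_mul_v

theorem disc_sq_eq_zero_of_systems_three_two (hΔ : Δ = -4 * u ^ 3 - 27 * v ^ 2)
    (ha₃ : Δ * a ^ 2 - 9 * u ^ 2 = 0)
    (hb₃ : Δ * (b ^ 2 + b) - (u ^ 3 + 27 * v ^ 2) = 0)
    (ha₂ : Δ * a ^ 3 - 9 * u ^ 2 * a - 27 * v = 0)
    (hb₂ : Δ * b ^ 3 + 3 * u ^ 3 * b - u ^ 3 = 0) :
    Δ ^ 2 = 0 := by
  have twentySeven_mul_v : 27 * v = 0 := by linear_combination a * ha₃ - ha₂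
  have disc_eq : Δ = -4 * u ^ 3 := by linear_combination hΔ - v * twentySeven_mul_v
  have disc_mul_sq : Δ * (2 * b + 1) ^ 2 = 0 := by
    linear_combination 4 * hb₃ + 4 * v * twentySeven_mul_v + disc_eq
  have disc_mul_cubic : Δ * (4 * b ^ 3 - 3 * b + 1) = 0 := by
    linear_combination 4 * hb₂ + (1 - 3 * b) * disc_eq
  have four_mul_disc : 4 * Δ = 0 := by
    linear_combination 2 * disc_mul_cubic - (2 * b - 2) * disc_mul_sq
  calc
    Δ ^ 2 = -u ^ 3 * (4 * Δ) := by linear_combination Δ * disc_eq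
    _ = 0 := by rw [four_mul_disc, mul_zero]

end

theorem cubic_congruence_systems_mutually_exclusive_general
    {R : Type*} [CommRing R]
    (u v Δ : R) (hΔdef : Δ = -4 * u ^ 3 - 27 * v ^ 2)
    (I : Ideal R) (hIΔ : Δ ^ 2 ∉ I) (a b c : R) :
    ¬ ((a ∈ I ∧ b - 1 ∈ I ∧ c ∈ I) ∧
       (Δ * a ^ 2 - 9 * u ^ 2 ∈ I ∧
        Δ * (b ^ 2 + b) - (u ^ 3 + 27 * v ^ 2) ∈ I ∧
        Δ * c ^ 2 - 4 * u ^ 4 ∈ I)) ∧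
    ¬ ((a ∈ I ∧ b - 1 ∈ I ∧ c ∈ I) ∧
       (Δ * a ^ 3 - 9 * u ^ 2 * a - 27 * v ∈ I ∧
        Δ * b ^ 3 + 3 * u ^ 3 * b - u ^ 3 ∈ I ∧
        Δ * c ^ 3 - 4 * u ^ 4 * c - 8 * u ^ 3 * v ∈ I)) ∧
    ¬ ((Δ * a ^ 2 - 9 * u ^ 2 ∈ I ∧
        Δ * (b ^ 2 + b) - (u ^ 3 + 27 * v ^ 2) ∈ I ∧
        Δ * c ^ 2 - 4 * u ^ 4 ∈ I) ∧
       (Δ * a ^ 3 - 9 * u ^ 2 * a - 27 * v ∈ I ∧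
        Δ * b ^ 3 + 3 * u ^ 3 * b - u ^ 3 ∈ I ∧
        Δ * c ^ 3 - 4 * u ^ 4 * c - 8 * u ^ 3 * v ∈ I)) := by
  have hΔ := congrArg (Ideal.Quotient.mk I) hΔdef
  simp only [← Ideal.Quotient.eq_zero_iff_mem, map_sub, map_add, map_mul, map_neg, map_pow,
    map_one, map_ofNat] at hΔ hIΔ ⊢
  refine ⟨?_, ?_, ?_⟩
  · rintro ⟨⟨ha₁, hb₁, hc₁⟩, ha₃, hb₃, hc₃⟩
    exact hIΔ (disc_sq_eq_zero_of_systems_one_three hΔ ha₁ hb₁ hc₁ ha₃ hb₃ hc₃)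
  · rintro ⟨⟨ha₁, hb₁, -⟩, ha₂, hb₂, -⟩
    have disc_eq_zero := disc_eq_zero_of_systems_one_two hΔ ha₁ hb₁ ha₂ hb₂
    exact hIΔ (by rw [disc_eq_zero, zero_pow two_ne_zero])
  · rintro ⟨⟨ha₃, hb₃, -⟩, ha₂, hb₂, -⟩
    exact hIΔ (disc_sq_eq_zero_of_systems_three_two hΔ ha₃ hb₃ ha₂ hb₂)

/-- **Proposition 26 (the three congruence systems are mutually exclusive).**  Let `K` be a
number field with ring of integers `A = 𝓞 K`, `u, v ∈ A`, `Δ = -4u³ - 27v²`, and `P` a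
prime of `A` with `Δ ∉ P`.  For `(a, b, c) ∈ A³` consider the systems
`S₁ : a ∈ P, b - 1 ∈ P, c ∈ P`;
`S₃ : Δa² - 9u² ∈ P, Δ(b² + b) - (u³ + 27v²) ∈ P, Δc² - 4u⁴ ∈ P`;
`S₂ : Δa³ - 9u²a - 27v ∈ P, Δb³ + 3u³b - u³ ∈ P, Δc³ - 4u⁴c - 8u³v ∈ P`.
Then no two distinct systems can hold simultaneously. -/
theorem cubic_congruence_systems_mutually_exclusive
    {K : Type*} [Field K] [NumberField K]
    (u v : 𝓞 K) (Δ : 𝓞 K) (hΔdef : Δ = -4 * u ^ 3 - 27 * v ^ 2)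
    (P : Ideal (𝓞 K)) (hPprime : P.IsPrime) (hPΔ : Δ ∉ P)
    (a b c : 𝓞 K) :
    ¬ ((a ∈ P ∧ b - 1 ∈ P ∧ c ∈ P) ∧
       (Δ * a ^ 2 - 9 * u ^ 2 ∈ P ∧
        Δ * (b ^ 2 + b) - (u ^ 3 + 27 * v ^ 2) ∈ P ∧
        Δ * c ^ 2 - 4 * u ^ 4 ∈ P)) ∧
    ¬ ((a ∈ P ∧ b - 1 ∈ P ∧ c ∈ P) ∧
       (Δ * a ^ 3 - 9 * u ^ 2 * a - 27 * v ∈ P ∧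
        Δ * b ^ 3 + 3 * u ^ 3 * b - u ^ 3 ∈ P ∧
        Δ * c ^ 3 - 4 * u ^ 4 * c - 8 * u ^ 3 * v ∈ P)) ∧
    ¬ ((Δ * a ^ 2 - 9 * u ^ 2 ∈ P ∧
        Δ * (b ^ 2 + b) - (u ^ 3 + 27 * v ^ 2) ∈ P ∧
        Δ * c ^ 2 - 4 * u ^ 4 ∈ P) ∧
       (Δ * a ^ 3 - 9 * u ^ 2 * a - 27 * v ∈ P ∧
        Δ * b ^ 3 + 3 * u ^ 3 * b - u ^ 3 ∈ P ∧
        Δ * c ^ 3 - 4 * u ^ 4 * c - 8 * u ^ 3 * v ∈ P)) :=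
  cubic_congruence_systems_mutually_exclusive_general u v Δ hΔdef P
    (fun h => hPΔ (hPprime.mem_of_pow_mem 2 h)) a b c
end
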